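/- Let k and t be positive integers with k ≥ 4. There exists n₀ = n₀(k,t) such that for all integers n ≥ n₀, the maximum number of edges in a k-uniform hypergraph on n vertices containing no copy of the k-uniform linear path P^{(k)}_{2t+2} of length 2t+2 equals C(n−1,k−1) + C(n−2,k−1) + … + C(n−t,k−1) + C(n−t−2,k−2). -/

import Mathlib

open Finset

/-- The family `F` of k-sets contains a k-uniform linear path of length ℓ. -/
def ContainsLinearPath (k ℓ : ℕ) {n : ℕ} (F : Finset (Finset (Fin n))) : Prop :=
  ∃ P : Fin ℓ → Finset (Fin n), Function.Injective P ∧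
    (∀ i, P i ∈ F) ∧ (∀ i, (P i).card = k) ∧
    (∀ i j : Fin ℓ, (i : ℕ) + 1 = (j : ℕ) → (P i ∩ P j).card = 1) ∧
    (∀ i j : Fin ℓ, (i : ℕ) + 1 < (j : ℕ) → P i ∩ P j = ∅)


set_option linter.unusedSectionVars false


def Ker {α : Type} [DecidableEq α] (F : Finset (Finset α)) (s : ℕ) (A : Finset α) : Prop :=
  ∀ W : Finset α, W.card ≤ s → ∃ E ∈ F, A ⊆ E ∧ E ∩ W ⊆ A

def IsLPath {α : Type} [DecidableEq α] (F : Finset (Finset α)) (l : ℕ) (P : ℕ → Finset α) : Prop :=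
  (∀ i < l, P i ∈ F) ∧ (∀ i, i + 1 < l → (P i ∩ P (i+1)).card = 1) ∧
    (∀ i j, i + 1 < j → j < l → P i ∩ P j = ∅)

def HasLPath {α : Type} [DecidableEq α] (F : Finset (Finset α)) (l : ℕ) : Prop :=
  ∃ P, IsLPath F l P

/-- a path with `l+1` edges, union `W` and a free vertex `x` on the last edge -/
def PathTo {α : Type} [DecidableEq α] (F : Finset (Finset α)) (l : ℕ) (W : Finset α) (x : α) : Prop :=
  ∃ P, IsLPath F (l+1) P ∧ W = (range (l+1)).biUnion P ∧ x ∈ P l ∧ ∀ i < l, x ∉ P i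

section basics
variable {α : Type} [DecidableEq α]

theorem Ker.mono {F G : Finset (Finset α)} {s r : ℕ} {A : Finset α} (h : Ker F s A) (hFG : F ⊆ G)
    (hr : r ≤ s) : Ker G r A := by
  intro W hW
  obtain ⟨E, hE, h1, h2⟩ := h W (hW.trans hr)
  exact ⟨E, hFG hE, h1, h2⟩

theorem HasLPath.mono {F G : Finset (Finset α)} {l : ℕ} (h : HasLPath F l) (hFG : F ⊆ G) :
    HasLPath G l := by
  obtain ⟨P, h1, h2⟩ := h
  exact ⟨P, fun i hi => hFG (h1 i hi), h2⟩

theorem PathTo.hasLPath {F : Finset (Finset α)} {l : ℕ} {W x} (h : PathTo F l W x) :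
    HasLPath F (l+1) := by
  obtain ⟨P, h1, h2⟩ := h
  exact ⟨P, h1⟩

theorem PathTo.card_le {F : Finset (Finset α)} {k l : ℕ} {W x} (hk : ∀ E ∈ F, E.card = k)
    (h : PathTo F l W x) : W.card ≤ (l+1) * k := by
  obtain ⟨P, h1, rfl, -⟩ := h
  refine card_biUnion_le.trans ?_
  calc _ ≤ ∑ i ∈ range (l+1), k := sum_le_sum (fun i hi => (hk _ (h1.1 i (mem_range.1 hi))).le)
    _ = _ := by simp

theorem PathTo.single {F : Finset (Finset α)} {E : Finset α} {x : α} (hE : E ∈ F) (hx : x ∈ E) :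
    PathTo F 0 E x := by
  refine ⟨fun _ => E, ⟨by simpa using hE, by omega, by omega⟩, by simp, hx, by simp⟩

theorem PathTo.mem {F : Finset (Finset α)} {l : ℕ} {W x} (h : PathTo F l W x) : x ∈ W := by
  obtain ⟨P, h1, rfl, h3, -⟩ := h
  exact mem_biUnion.2 ⟨l, by simp, h3⟩

theorem PathTo.extend {F : Finset (Finset α)} {l : ℕ} {W x} (h : PathTo F l W x) {E : Finset α}
    (hE : E ∈ F) (hx : x ∈ E) (hEW : E ∩ W ⊆ {x}) {y : α} (hy : y ∈ E) (hyx : y ≠ x) :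
    PathTo F (l+1) (W ∪ E) y := by
  obtain ⟨P, ⟨h1, h2, h3⟩, rfl, h4, h5⟩ := h
  have key : ∀ i < l + 1, ∀ z ∈ E, z ∈ P i → z = x := by
    intro i hi z hz hzi
    have : z ∈ E ∩ (range (l+1)).biUnion P :=
      mem_inter.2 ⟨hz, mem_biUnion.2 ⟨i, mem_range.2 hi, hzi⟩⟩
    simpa using hEW this
  have hP : ∀ i < l + 1, Function.update P (l+1) E i = P i := by
    intro i hi; rw [Function.update_of_ne (by omega)]
  refine ⟨Function.update P (l+1) E, ⟨?_, ?_, ?_⟩, ?_, ?_, ?_⟩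
  · intro i hi
    rcases Nat.lt_succ_iff_lt_or_eq.1 hi with h | h
    · rw [hP i h]; exact h1 i h
    · subst h; simpa using hE
  · intro i hi
    rw [hP i (by omega)]
    by_cases h : i + 1 < l + 1
    · rw [hP _ h]; exact h2 i h
    · have : i = l := by omega
      subst this
      rw [Function.update_self, card_eq_one]
      refine ⟨x, ?_⟩
      ext z
      simp only [mem_inter, mem_singleton]
      constructor
      · rintro ⟨ha, hb⟩; exact key i (by omega) z hb ha
      · rintro rfl; exact ⟨h4, hx⟩
  · intro i j hij hj
    rw [hP i (by omega)]
    by_cases h : j < l + 1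
    · rw [hP _ h]; exact h3 i j hij h
    · have : j = l + 1 := by omega
      subst this
      rw [Function.update_self, eq_empty_iff_forall_notMem]
      intro z hz
      rw [mem_inter] at hz
      have := key i (by omega) z hz.2 hz.1
      subst this
      exact h5 i (by omega) hz.1
  · rw [range_add_one (n := l+1), biUnion_insert, Function.update_self, union_comm]
    congr 1
    apply biUnion_congr rfl
    intro i hi
    rw [hP i (mem_range.1 hi)]
  · simpa using hy
  · intro i hi hyi
    rw [hP i hi] at hyi
    exact hyx (key i hi y hy hyi)

/-- two kernels meeting in one vertex -/
theorem two_ker {F : Finset (Finset α)} {k s : ℕ} (hF : ∀ E ∈ F, E.card = k) {A B : Finset α}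
    (hA : Ker F s A) (hB : Ker F s B) (hks : k ≤ s) (hBs : B.card ≤ s) (h1 : (A ∩ B).card = 1) :
    HasLPath F 2 := by
  obtain ⟨E, hE, hAE, hEB⟩ := hA B hBs
  obtain ⟨E', hE', hBE, hEE⟩ := hB E ((hF E hE).le.trans hks)
  have : E ∩ E' = A ∩ B := by
    ext z
    have a1 := @hAE z
    have a2 := @hBE z
    have a3 := @hEB z
    have a4 := @hEE z
    simp only [mem_inter] at *
    tauto
  refine ⟨fun i => if i = 0 then E else E', ?_, ?_, ?_⟩
  · intro i hi; dsimp; split_ifs <;> assumption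
  · intro i hi
    have : i = 0 := by omega
    subst this; simp [*]
  · intro i j h1 h2; omega

theorem hasLPath_two {F : Finset (Finset α)} {E E' : Finset α} (hE : E ∈ F) (hE' : E' ∈ F)
    (h1 : (E ∩ E').card = 1) : HasLPath F 2 := by
  refine ⟨fun i => if i = 0 then E else E', ?_, ?_, ?_⟩
  · intro i hi; dsimp; split_ifs <;> assumption
  · intro i hi
    have : i = 0 := by omega
    subst this; simp [*]
  · intro i j h1 h2; omega

/-- paths in the graph of 2-kernels give linear paths -/
theorem graph_path {F : Finset (Finset α)} {k s l : ℕ} (hF : ∀ E ∈ F, E.card = k) (u : ℕ → α)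
    (hu : ∀ i j, i ≤ l + 1 → j ≤ l + 1 → u i = u j → i = j)
    (hK : ∀ i ≤ l, Ker F s {u i, u (i+1)}) (hs : (l + 2) * k + l + 2 ≤ s) : HasLPath F (l+1) := by
  set U := (range (l+2)).image u with hU
  have hUc : U.card ≤ l + 2 := card_image_le.trans (by simp)
  have main : ∀ j ≤ l, ∃ W, PathTo F j W (u (j+1)) ∧ ∀ i ≤ l + 1, u i ∈ W → i ≤ j + 1 := by
    intro j
    induction j with
    | zero =>
      intro _
      obtain ⟨E, hE, h1, h2⟩ := hK 0 (by omega) U (by omega)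
      refine ⟨E, PathTo.single hE (h1 (by simp)), ?_⟩
      intro i hi hiE
      have : u i ∈ E ∩ U := mem_inter.2 ⟨hiE, mem_image_of_mem _ (by simp; omega)⟩
      have := h2 this
      simp only [mem_insert, mem_singleton] at this
      rcases this with h | h
      · have := hu _ _ hi (by omega) h; omega
      · have := hu _ _ hi (by omega) h; omega
    | succ j ih =>
      intro hj
      obtain ⟨W, hW, hWu⟩ := ih (by omega)
      have hc := hW.card_le hF
      have hc2 : (j+1) * k ≤ (l+2) * k := Nat.mul_le_mul_right _ (by omega)
      obtain ⟨E, hE, h1, h2⟩ := hK (j+1) hj (W ∪ U) ((card_union_le _ _).trans (by omega))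
      refine ⟨W ∪ E, hW.extend hE (h1 (by simp)) ?_ (h1 (by simp)) ?_, ?_⟩
      · intro z hz
        rw [mem_inter] at hz
        have := h2 (mem_inter.2 ⟨hz.1, mem_union_left _ hz.2⟩)
        simp only [mem_insert, mem_singleton] at this ⊢
        rcases this with h | h
        · exact h
        · subst h
          have := hWu _ (by omega) hz.2
          omega
      · intro h
        have := hu _ _ (by omega) (by omega) h; omega
      · intro i hi hiW
        rcases mem_union.1 hiW with h | h
        · have := hWu i hi h; omega
        · have := h2 (mem_inter.2 ⟨h, mem_union_right _ (mem_image_of_mem _ (by simp; omega))⟩)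
          simp only [mem_insert, mem_singleton] at this
          rcases this with h | h
          · have := hu _ _ hi (by omega) h; omega
          · have := hu _ _ hi (by omega) h; omega
  obtain ⟨W, hW, -⟩ := main l le_rfl
  exact hW.hasLPath

/-- degree of non-kernels -/
theorem nonker_deg {F : Finset (Finset α)} {V : Finset α} {k s : ℕ}
    (hF : ∀ E ∈ F, E ⊆ V ∧ E.card = k) {A : Finset α} (hA : ¬ Ker F s A) :
    (F.filter (A ⊆ ·)).card ≤ s * V.card ^ (k - A.card - 1) := by
  unfold Ker at hA
  push Not at hA
  obtain ⟨W, hW, hE⟩ := hA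
  have : F.filter (A ⊆ ·) ⊆ (W \ A).biUnion (fun w =>
      (powersetCard (k - A.card - 1) V).image (fun B => B ∪ insert w A)) := by
    intro E hEF
    rw [mem_filter] at hEF
    obtain ⟨w, hw1, hw2⟩ := not_subset.1 (hE E hEF.1 hEF.2)
    rw [mem_inter] at hw1
    have hsub : insert w A ⊆ E := insert_subset hw1.1 hEF.2
    refine mem_biUnion.2 ⟨w, mem_sdiff.2 ⟨hw1.2, hw2⟩, mem_image.2 ⟨E \ insert w A, ?_, ?_⟩⟩
    · rw [mem_powersetCard]
      refine ⟨sdiff_subset.trans (hF E hEF.1).1, ?_⟩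
      rw [card_sdiff_of_subset hsub, card_insert_of_notMem hw2, (hF E hEF.1).2]
      omega
    · exact sdiff_union_of_subset hsub
  refine (card_le_card this).trans (card_biUnion_le.trans ?_)
  calc _ ≤ ∑ w ∈ W \ A, V.card ^ (k - A.card - 1) := by
        apply sum_le_sum
        intro w _
        refine card_image_le.trans ?_
        rw [card_powersetCard]
        exact Nat.choose_le_pow _ _
    _ ≤ _ := by
        rw [sum_const, smul_eq_mul]
        exact Nat.mul_le_mul_right _ ((card_le_card sdiff_subset).trans hW)
end basics



section furedi
variable {α : Type} [DecidableEq α]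

def cproj {k : ℕ} (χ : α → Fin k) (T : Finset (Fin k)) (E : Finset α) : Finset α :=
  E.filter (fun x => χ x ∈ T)

theorem cproj_image {k : ℕ} {χ : α → Fin k} {T : Finset (Fin k)} {E : Finset α}
    (hE : E.card = k) (hi : Set.InjOn χ E) : (cproj χ T E).image χ = T := by
  have : E.image χ = univ := by
    apply eq_univ_of_card
    rw [card_image_of_injOn hi, hE]; simp
  ext c
  simp only [cproj, mem_image, mem_filter]
  constructor
  · rintro ⟨x, ⟨_, h⟩, rfl⟩; exact h
  · intro hc
    have : c ∈ E.image χ := by rw [this]; simp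
    obtain ⟨x, hx, rfl⟩ := mem_image.1 this
    exact ⟨x, ⟨hx, hc⟩, rfl⟩

theorem eq_cproj_of_image {k : ℕ} {χ : α → Fin k} {T : Finset (Fin k)} {E A : Finset α}
    (hi : Set.InjOn χ E) (hA : A ⊆ E) (hT : A.image χ = T) : A = cproj χ T E := by
  subst hT
  ext x
  simp only [cproj, mem_image, mem_filter]
  constructor
  · intro hx; exact ⟨hA hx, x, hx, rfl⟩
  · rintro ⟨hx, y, hy, hxy⟩
    have := hi (hA hy) hx hxy
    subst this; exact hy

/-- no two distinct edges meet exactly in colour type `T` -/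
def NoMeet {k : ℕ} (χ : α → Fin k) (H : Finset (Finset α)) (T : Finset (Fin k)) : Prop :=
  ∀ E ∈ H, ∀ E' ∈ H, E ≠ E' → (E ∩ E').image χ ≠ T

theorem furedi_prune {k : ℕ} (s : ℕ) (χ : α → Fin k) (J : Finset (Finset (Fin k))) :
    ∀ (m : ℕ) (H : Finset (Finset α)), H.card ≤ m → (∀ E ∈ H, E.card = k ∧ Set.InjOn χ E) →
      ∃ H0 ⊆ H, (∀ T ∈ J, ∀ E ∈ H0, Ker H0 s (cproj χ T E)) ∧
      ∃ R : Finset (Fin k) → Finset (Finset α), (∀ T, R T ⊆ H) ∧ (∀ T, NoMeet χ (R T) T) ∧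
        H.card ≤ H0.card + s * ∑ T ∈ J, (R T).card := by
  intro m
  induction m with
  | zero =>
    intro H hH _
    have : H = ∅ := by simpa using hH
    subst this
    exact ⟨∅, subset_rfl, by simp, fun _ => ∅, by simp, by intro T; simp [NoMeet], by simp⟩
  | succ m ih =>
    intro H hm hH
    by_cases hgood : ∀ T ∈ J, ∀ E ∈ H, Ker H s (cproj χ T E)
    · exact ⟨H, subset_rfl, hgood, fun _ => ∅, by simp, by intro T; simp [NoMeet], by simp⟩
    push Not at hgood
    obtain ⟨T, hT, E, hE, hK⟩ := hgood
    set A := cproj χ T E with hA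
    have hAE : A ⊆ E := filter_subset _ _
    have hAT : A.image χ = T := cproj_image (hH E hE).1 (hH E hE).2
    unfold Ker at hK
    push Not at hK
    obtain ⟨W, hW, hWE⟩ := hK
    set D := H.filter (A ⊆ ·) with hD
    have hED : E ∈ D := mem_filter.2 ⟨hE, hAE⟩
    -- popular vertex
    have hpop : ∃ w ∉ A, D.card ≤ s * (D.filter (w ∈ ·)).card := by
      have hcov : D ⊆ (W \ A).biUnion (fun w => D.filter (w ∈ ·)) := by
        intro E' hE'
        obtain ⟨w, hw1, hw2⟩ := not_subset.1 (hWE E' (mem_filter.1 hE').1 (mem_filter.1 hE').2)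
        rw [mem_inter] at hw1
        exact mem_biUnion.2 ⟨w, mem_sdiff.2 ⟨hw1.2, hw2⟩, mem_filter.2 ⟨hE', hw1.1⟩⟩
      have hne : (W \ A).Nonempty := by
        obtain ⟨w, hw, -⟩ := mem_biUnion.1 (hcov hED)
        exact ⟨w, hw⟩
      obtain ⟨w, hw, hmax⟩ := exists_max_image (W \ A) (fun w => (D.filter (w ∈ ·)).card) hne
      refine ⟨w, (mem_sdiff.1 hw).2, ?_⟩
      refine (card_le_card hcov).trans (card_biUnion_le.trans ((sum_le_sum hmax).trans ?_))
      rw [sum_const, smul_eq_mul]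
      exact Nat.mul_le_mul_right _ ((card_le_card sdiff_subset).trans hW)
    obtain ⟨w, hwA, hDw⟩ := hpop
    have hDH : D ⊆ H := filter_subset _ _
    have hcard : (H \ D).card + D.card = H.card := card_sdiff_add_card_eq_card hDH
    have hDpos : 0 < D.card := card_pos.2 ⟨E, hED⟩
    obtain ⟨H0, hH0, hker, R, hR1, hR2, hR3⟩ := ih (H \ D) (by omega)
      (fun E' h => hH E' (mem_sdiff.1 h).1)
    refine ⟨H0, hH0.trans sdiff_subset, hker,
      Function.update R T (R T ∪ D.filter (w ∈ ·)), ?_, ?_, ?_⟩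
    · intro T'
      by_cases h : T' = T
      · subst h
        rw [Function.update_self]
        exact union_subset ((hR1 _).trans sdiff_subset) ((filter_subset _ _).trans hDH)
      · rw [Function.update_of_ne h]; exact (hR1 _).trans sdiff_subset
    · intro T'
      by_cases h : T' = T
      swap
      · rw [Function.update_of_ne h]; exact hR2 _
      subst h
      rw [Function.update_self]
      have hcross : ∀ E1 ∈ D, ∀ E2 ∈ H \ D, (E1 ∩ E2).image χ ≠ T' := by
        intro E1 h1 E2 h2 h
        have e1 := eq_cproj_of_image (hH E1 (hDH h1)).2 inter_subset_left h
        have e2 := eq_cproj_of_image (hH E1 (hDH h1)).2 (mem_filter.1 h1).2 hAT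
        rw [← e2] at e1
        have : A ⊆ E2 := e1 ▸ inter_subset_right
        rw [mem_sdiff] at h2
        exact h2.2 (mem_filter.2 ⟨h2.1, this⟩)
      intro E1 h1 E2 h2 hne h
      rcases mem_union.1 h1 with h1 | h1 <;> rcases mem_union.1 h2 with h2 | h2
      · exact hR2 _ E1 h1 E2 h2 hne h
      · rw [inter_comm] at h
        exact hcross E2 (mem_filter.1 h2).1 E1 (hR1 _ h1) h
      · exact hcross E1 (mem_filter.1 h1).1 E2 (hR1 _ h2) h
      · rw [mem_filter] at h1 h2
        have e1 := eq_cproj_of_image (hH E1 (hDH h1.1)).2 inter_subset_left h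
        have e2 := eq_cproj_of_image (hH E1 (hDH h1.1)).2 (mem_filter.1 h1.1).2 hAT
        rw [← e2] at e1
        exact hwA (e1 ▸ mem_inter.2 ⟨h1.2, h2.2⟩)
    · have hsum : ∑ T' ∈ J, (Function.update R T (R T ∪ D.filter (w ∈ ·)) T').card
          = (∑ T' ∈ J, (R T').card) + (D.filter (w ∈ ·)).card := by
        rw [← add_sum_erase _ _ hT, ← add_sum_erase J (fun T' => (R T').card) hT,
          Function.update_self, card_union_of_disjoint]
        · have : ∀ T' ∈ J.erase T, (Function.update R T (R T ∪ D.filter (w ∈ ·)) T').card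
              = (R T').card := by
            intro T' h
            rw [Function.update_of_ne (ne_of_mem_erase h)]
          rw [sum_congr rfl this]; ring
        · rw [disjoint_left]
          intro E' h1 h2
          exact (mem_sdiff.1 (hR1 _ h1)).2 (mem_filter.1 h2).1
      rw [hsum, mul_add]
      omega

theorem furedi_step {k : ℕ} (s : ℕ) (χ : α → Fin k) :
    ∀ (m : ℕ) (J : Finset (Finset (Fin k))) (H : Finset (Finset α)), J.card ≤ m →
      (∀ E ∈ H, E.card = k ∧ Set.InjOn χ E) → (∀ T ∉ J, NoMeet χ H T) →
      ∃ H' ⊆ H, ∃ J' ⊆ J, H.card ≤ (1 + s * 2 ^ 2 ^ k) ^ (m + 1) * H'.card ∧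
        (∀ T ∈ J', ∀ E ∈ H', Ker H' s (cproj χ T E)) ∧ (∀ T ∉ J', NoMeet χ H' T) := by
  intro m
  induction m with
  | zero =>
    intro J H hJ hH hN
    have : J = ∅ := by simpa using hJ
    subst this
    refine ⟨H, subset_rfl, ∅, subset_rfl, ?_, by simp, hN⟩
    exact Nat.le_mul_of_pos_left _ (by positivity)
  | succ m ih =>
    intro J H hJ hH hN
    obtain ⟨H0, hH0, hker, R, hR1, hR2, hR3⟩ := furedi_prune s χ J _ H le_rfl hH
    have hmono : ∀ X ⊆ H, ∀ T, NoMeet χ H T → NoMeet χ X T :=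
      fun X hX T h E hE E' hE' => h E (hX hE) E' (hX hE')
    by_cases hbig : H.card ≤ (1 + s * 2 ^ 2 ^ k) * H0.card
    · refine ⟨H0, hH0, J, subset_rfl, hbig.trans ?_, hker, fun T hT => hmono _ hH0 _ (hN T hT)⟩
      apply Nat.mul_le_mul_right
      exact Nat.le_self_pow (by omega) _
    · have : ∃ T ∈ J, H.card ≤ (1 + s * 2 ^ 2 ^ k) * (R T).card := by
        by_contra hcon
        push Not at hcon hbig
        have hJ2 : J.card ≤ 2 ^ 2 ^ k := by
          refine (card_le_univ J).trans ?_
          have : 2 ^ k ≤ 2 ^ 2 ^ k := Nat.pow_le_pow_right (by norm_num) Nat.lt_two_pow_self.le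
          simpa using this
        have h1 : (1 + s * 2 ^ 2 ^ k) * ∑ T ∈ J, (R T).card ≤ J.card * H.card := by
          rw [mul_sum, ← smul_eq_mul J.card, ← sum_const]
          exact sum_le_sum (fun T hT => (hcon T hT).le)
        have h2 : J.card * H.card ≤ 2 ^ 2 ^ k * H.card := Nat.mul_le_mul_right _ hJ2
        have h3 := Nat.mul_le_mul_left s (h1.trans h2)
        have h4 := Nat.mul_le_mul_left (1 + s * 2 ^ 2 ^ k) hR3
        generalize 2 ^ 2 ^ k = Q at *
        generalize ∑ T ∈ J, (R T).card = S at *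
        nlinarith
      obtain ⟨T, hT, hb⟩ := this
      obtain ⟨H', hH', J', hJ', h1, h2, h3⟩ := ih (J.erase T) (R T)
        (by rw [card_erase_of_mem hT]; omega) (fun E hE => hH E (hR1 _ hE)) (by
          intro T' hT'
          by_cases h : T' = T
          · subst h; exact hR2 _
          · exact hmono _ (hR1 _) _ (hN T' (fun h' => hT' (mem_erase.2 ⟨h, h'⟩))))
      refine ⟨H', hH'.trans (hR1 _), J', hJ'.trans (erase_subset _ _), ?_, h2, h3⟩
      calc _ ≤ _ := hb
        _ ≤ _ := Nat.mul_le_mul_left _ h1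
        _ = _ := by ring

theorem rainbow {k : ℕ} [Fintype α] (hk : 0 < k) (F : Finset (Finset α)) (hF : ∀ E ∈ F, E.card = k) :
    ∃ χ : α → Fin k, ∃ H ⊆ F, (∀ E ∈ H, Set.InjOn χ E) ∧ F.card ≤ k ^ k * H.card := by
  classical
  have key : ∀ E ∈ F, Fintype.card (α → Fin k) ≤
      k ^ k * ((univ : Finset (α → Fin k)).filter (fun χ => Set.InjOn χ E)).card := by
    intro E hE
    have e : E ≃ Fin k := Fintype.equivFinOfCardEq (by simpa using hF E hE)
    let f : (α → Fin k) → (α → Fin k) := fun χ x => if h : x ∈ E then e ⟨x, h⟩ else χ x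
    have hf : ∀ χ ∈ (univ : Finset (α → Fin k)), f χ ∈ (univ : Finset (α → Fin k)).filter
        (fun χ => Set.InjOn χ E) := by
      intro χ _
      rw [mem_filter]
      refine ⟨mem_univ _, ?_⟩
      intro x hx y hy hxy
      have hx' : x ∈ E := hx
      have hy' : y ∈ E := hy
      simp only [f, hx', hy', dif_pos] at hxy
      have := e.injective hxy
      simpa using this
    rw [mul_comm]
    have := card_le_mul_card_image_of_maps_to hf (k ^ k) ?_
    · rw [← card_univ, mul_comm]; exact this
    · intro χ' _
      have : (k ^ k) = Fintype.card (E → Fin k) := by simp [hF E hE]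
      rw [this, ← card_univ]
      apply card_le_card_of_injOn (fun χ x => χ x.1) (by simp)
      intro χ1 h1 χ2 h2 h12
      simp only [coe_filter, Set.mem_ofPred_eq, mem_univ, true_and] at h1 h2
      funext x
      by_cases hx : x ∈ E
      · exact congrFun h12 ⟨x, hx⟩
      · have := congrFun (h1.trans h2.symm) x
        simpa [f, hx] using this
  have : Nonempty (Fin k) := ⟨⟨0, hk⟩⟩
  let G : (α → Fin k) → Finset (Finset α) := fun χ => F.filter (fun E => Set.InjOn χ E)
  by_contra hcon
  push Not at hcon
  have hG : ∀ χ, k ^ k * (G χ).card < F.card := fun χ =>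
    hcon χ (G χ) (filter_subset _ _) (fun E hE => (mem_filter.1 hE).2)
  have h1 : ∑ χ : α → Fin k, k ^ k * (G χ).card < ∑ χ : α → Fin k, F.card :=
    sum_lt_sum_of_nonempty univ_nonempty (fun χ _ => hG χ)
  have h2 : ∑ χ : α → Fin k, (G χ).card
      = ∑ E ∈ F, ((univ : Finset (α → Fin k)).filter (fun χ => Set.InjOn χ E)).card := by
    simp only [G, card_filter]
    exact sum_comm
  have h3 : ∑ E ∈ F, Fintype.card (α → Fin k) ≤ k ^ k * ∑ χ : α → Fin k, (G χ).card := by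
    rw [h2, mul_sum]
    exact sum_le_sum key
  rw [← mul_sum, sum_const, smul_eq_mul, card_univ] at h1
  rw [sum_const, smul_eq_mul, mul_comm] at h3
  omega

def Homog {k : ℕ} (s : ℕ) (χ : α → Fin k) (H : Finset (Finset α)) (J : Finset (Finset (Fin k))) :
    Prop :=
  (∀ E ∈ H, E.card = k ∧ Set.InjOn χ E) ∧ univ ∉ J ∧
    (∀ T ∈ J, ∀ E ∈ H, Ker H s (cproj χ T E)) ∧ (∀ T ∉ J, NoMeet χ H T)

theorem furedi (k s : ℕ) (hk : 0 < k) : ∃ C : ℕ, ∀ (α : Type) [Fintype α] [DecidableEq α]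
    (F : Finset (Finset α)), (∀ E ∈ F, E.card = k) →
    ∃ (χ : α → Fin k) (H : Finset (Finset α)) (J : Finset (Finset (Fin k))),
      H ⊆ F ∧ F.card ≤ C * H.card ∧ Homog s χ H J := by
  refine ⟨k ^ k * (1 + s * 2 ^ 2 ^ k) ^ ((univ.erase (univ : Finset (Fin k))).card + 1), ?_⟩
  intro α _ _ F hF
  obtain ⟨χ, H, hHF, hHi, hHc⟩ := rainbow hk F hF
  have hH : ∀ E ∈ H, E.card = k ∧ Set.InjOn χ E := fun E hE => ⟨hF E (hHF hE), hHi E hE⟩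
  obtain ⟨H', hH', J', hJ', h1, h2, h3⟩ := furedi_step s χ _ (univ.erase (univ : Finset (Fin k))) H
    le_rfl hH (by
      intro T hT
      have : T = univ := by simpa using hT
      subst this
      intro E hE E' hE' hne h
      have e1 := eq_cproj_of_image (hH E hE).2 inter_subset_left h
      have e2 := eq_cproj_of_image (hH E' hE').2 inter_subset_right h
      apply hne
      have : ∀ X : Finset α, cproj χ univ X = X := by intro X; simp [cproj]
      rw [this] at e1 e2
      exact e1.symm.trans e2)
  refine ⟨χ, H', J', hH'.trans hHF, ?_, fun E hE => hH E (hH' hE), ?_, h2, h3⟩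
  · calc _ ≤ _ := hHc
      _ ≤ _ := Nat.mul_le_mul_left _ h1
      _ = _ := by ring
  · intro h
    simpa using hJ' h

end furedi


section struct
variable {α : Type} [DecidableEq α]

theorem Homog.closed {k s : ℕ} {χ : α → Fin k} {H : Finset (Finset α)} {J : Finset (Finset (Fin k))}
    (h : Homog s χ H J) (hne : H.Nonempty) (hs : 2 * k ≤ s) {T1 T2 : Finset (Fin k)}
    (h1 : T1 ∈ J) (h2 : T2 ∈ J) : T1 ∩ T2 ∈ J := by
  obtain ⟨hH, hu, hK, hN⟩ := h
  obtain ⟨E, hE⟩ := hne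
  obtain ⟨E', hE', a1, a2⟩ := hK T1 h1 E hE E (by have := (hH E hE).1; omega)
  obtain ⟨E'', hE'', b1, b2⟩ := hK T2 h2 E' hE' (E ∪ E') (by
    have := (hH E hE).1; have := (hH E' hE').1; have := card_union_le E E'; omega)
  have key : E'' ∩ E = cproj χ (T1 ∩ T2) E := by
    ext z
    have a1 := @a1 z
    have a2 := @a2 z
    have b1 := @b1 z
    have b2 := @b2 z
    simp only [cproj, mem_inter, mem_filter, mem_union] at *
    tauto
  have hi : (E'' ∩ E).image χ = T1 ∩ T2 := by
    rw [key]; exact cproj_image (hH E hE).1 (hH E hE).2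
  by_contra hcon
  by_cases hEE : E'' = E
  · subst hEE
    rw [inter_self] at hi key
    have : T1 ∩ T2 = univ := by
      rw [← hi]; apply eq_univ_of_card
      rw [card_image_of_injOn (hH _ hE).2, (hH _ hE).1]; simp
    have : T1 = univ := by
      apply univ_subset_iff.1; rw [← this]; exact inter_subset_left
    exact hu (this ▸ h1)
  · exact hN _ hcon E'' hE'' E hE hEE hi

theorem cproj_card {k : ℕ} {χ : α → Fin k} {T : Finset (Fin k)} {E : Finset α}
    (hE : E.card = k) (hi : Set.InjOn χ E) : (cproj χ T E).card = T.card := by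
  have h := cproj_image (T := T) hE hi
  have h2 : ((cproj χ T E).image χ).card = (cproj χ T E).card :=
    card_image_of_injOn (hi.mono (filter_subset _ _))
  rw [h] at h2
  exact h2.symm

theorem Homog.own_inj {k s : ℕ} {χ : α → Fin k} {H : Finset (Finset α)}
    {J : Finset (Finset (Fin k))} (h : Homog s χ H J) {T : Finset (Fin k)}
    (hT : ∀ U ∈ J, ¬ T ⊆ U) : Set.InjOn (cproj χ T) H := by
  obtain ⟨hH, hu, hK, hN⟩ := h
  intro E hE E' hE' hEE
  by_contra hne
  have hsub : T ⊆ (E ∩ E').image χ := by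
    rw [← cproj_image (T := T) (hH E hE).1 (hH E hE).2]
    apply image_subset_image
    have h1 : cproj χ T E ⊆ E := filter_subset _ _
    have h2 : cproj χ T E' ⊆ E' := filter_subset _ _
    exact subset_inter h1 (hEE ▸ h2)
  by_cases hJ : (E ∩ E').image χ ∈ J
  · exact hT _ hJ hsub
  · exact hN _ hJ E hE E' hE' hne rfl

theorem Homog.own {k s : ℕ} {χ : α → Fin k} {H : Finset (Finset α)} {V : Finset α}
    {J : Finset (Finset (Fin k))} (h : Homog s χ H J) (hV : ∀ E ∈ H, E ⊆ V) {T : Finset (Fin k)}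
    (hT : ∀ U ∈ J, ¬ T ⊆ U) : H.card ≤ V.card ^ T.card := by
  calc H.card ≤ (powersetCard T.card V).card := by
        apply card_le_card_of_injOn (cproj χ T) _ (h.own_inj hT)
        intro E hE
        have hE' : E ∈ H := hE
        rw [mem_coe, mem_powersetCard]
        exact ⟨(filter_subset _ _).trans (hV E hE), cproj_card (h.1 E hE').1 (h.1 E hE').2⟩
    _ ≤ _ := by rw [card_powersetCard]; exact Nat.choose_le_pow _ _

theorem exists_color {k : ℕ} {χ : α → Fin k} {E : Finset α}
    (hE : E.card = k) (hi : Set.InjOn χ E) (c : Fin k) : ∃ x ∈ E, χ x = c := by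
  have : c ∈ (cproj χ {c} E).image χ := by rw [cproj_image hE hi]; simp
  obtain ⟨x, hx, h⟩ := mem_image.1 this
  exact ⟨x, (mem_filter.1 hx).1, h⟩

theorem cproj_singleton {k : ℕ} {χ : α → Fin k} {E : Finset α} (hi : Set.InjOn χ E) {x : α}
    (hx : x ∈ E) : cproj χ {χ x} E = {x} :=
  (eq_cproj_of_image hi (by simpa using hx) (by simp)).symm

theorem Homog.two_single {k s : ℕ} {χ : α → Fin k} {H : Finset (Finset α)}
    {J : Finset (Finset (Fin k))} (h : Homog s χ H J) (hne : H.Nonempty) {a b : Fin k} (hab : a ≠ b)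
    (ha : {a} ∈ J) (hb : {b} ∈ J) (l : ℕ) (hs : (l + 1) * k ≤ s) : HasLPath H (l + 1) := by
  have hH := h.1
  have main : ∀ j ≤ l, ∃ W x, PathTo H j W x ∧ (χ x = a ∨ χ x = b) := by
    intro j
    induction j with
    | zero =>
      intro _
      obtain ⟨E, hE⟩ := hne
      obtain ⟨x, hx, hxa⟩ := exists_color (hH E hE).1 (hH E hE).2 a
      exact ⟨E, x, PathTo.single hE hx, Or.inl hxa⟩
    | succ j ih =>
      intro hj
      obtain ⟨W, x, hP, hx⟩ := ih (by omega)
      have hJ : {χ x} ∈ J := by rcases hx with h | h <;> rw [h] <;> assumption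
      have hker : Ker H s {x} := by
        obtain ⟨P, hP1, -, hP2, -⟩ := hP
        have hPH := hP1.1 j (by omega)
        rw [← cproj_singleton (hH _ hPH).2 hP2]
        exact h.2.2.1 _ hJ _ hPH
      have hc := hP.card_le (fun E hE => (hH E hE).1)
      have hc2 : (j+1) * k ≤ (l+1) * k := Nat.mul_le_mul_right _ (by omega)
      obtain ⟨E, hE, h1, h2⟩ := hker W (by omega)
      have hy : ∃ y ∈ E, y ≠ x ∧ (χ y = a ∨ χ y = b) := by
        rcases hx with hx | hx
        · obtain ⟨y, hy, hyb⟩ := exists_color (hH E hE).1 (hH E hE).2 b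
          refine ⟨y, hy, ?_, Or.inr hyb⟩
          rintro rfl; exact hab (hx.symm.trans hyb)
        · obtain ⟨y, hy, hyb⟩ := exists_color (hH E hE).1 (hH E hE).2 a
          refine ⟨y, hy, ?_, Or.inl hyb⟩
          rintro rfl; exact hab (hyb.symm.trans hx)
      obtain ⟨y, hy, hyx, hyc⟩ := hy
      exact ⟨_, y, hP.extend hE (by simpa using h1) h2 hy hyx, hyc⟩
  obtain ⟨W, x, hP, -⟩ := main l le_rfl
  exact hP.hasLPath

theorem Homog.one_single {k s : ℕ} {χ : α → Fin k} {H : Finset (Finset α)}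
    {J : Finset (Finset (Fin k))} (h : Homog s χ H J) (hne : H.Nonempty) {a : Fin k}
    (ha : {a} ∈ J) (hs : k ≤ s) : HasLPath H 2 := by
  have hH := h.1
  obtain ⟨E, hE⟩ := hne
  have hker := h.2.2.1 _ ha E hE
  obtain ⟨E', hE', h1, h2⟩ := hker E (by have := (hH E hE).1; omega)
  apply hasLPath_two hE' hE
  have : E' ∩ E = cproj χ {a} E := Subset.antisymm h2 (subset_inter h1 (filter_subset _ _))
  rw [this, cproj_card (hH E hE).1 (hH E hE).2]; simp

end struct

section comb
variable {k : ℕ} {J : Finset (Finset (Fin k))}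

theorem sep_mem (hc : ∀ T1 ∈ J, ∀ T2 ∈ J, T1 ∩ T2 ∈ J) {A : Finset (Fin k)} (hA : A ≠ univ)
    (h : ∀ y ∉ A, ∃ U ∈ J, A ⊆ U ∧ y ∉ U) : A ∈ J := by
  have main : ∀ m : ℕ, ∀ U ∈ J, A ⊆ U → (U \ A).card ≤ m → A ∈ J := by
    intro m
    induction m with
    | zero =>
      intro U hU hAU hc
      have : U \ A = ∅ := by simpa using hc
      rw [sdiff_eq_empty_iff_subset] at this
      rwa [Subset.antisymm hAU this]
    | succ m ih =>
      intro U hU hAU hcd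
      by_cases hUA : U ⊆ A
      · rwa [Subset.antisymm hAU hUA]
      obtain ⟨y, hy, hyA⟩ := not_subset.1 hUA
      obtain ⟨U', hU', h1, h2⟩ := h y hyA
      refine ih (U ∩ U') (hc _ hU _ hU') (subset_inter hAU h1) ?_
      have : (U ∩ U') \ A ⊂ U \ A := by
        refine ⟨sdiff_subset_sdiff inter_subset_left subset_rfl, fun hs => ?_⟩
        have := hs (mem_sdiff.2 ⟨hy, hyA⟩)
        simp [h2] at this
      have := card_lt_card this
      omega
  obtain ⟨y, hy⟩ : ∃ y, y ∉ A := by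
    by_contra hcon; push Not at hcon; exact hA (eq_univ_of_forall hcon)
  obtain ⟨U, hU, h1, -⟩ := h y hy
  exact main _ U hU h1 le_rfl

theorem not_single (hk : 2 ≤ k) (hc : ∀ T1 ∈ J, ∀ T2 ∈ J, T1 ∩ T2 ∈ J) {x : Fin k} (hx : {x} ∉ J) :
    ∃ y, y ≠ x ∧ ∀ U ∈ J, x ∈ U → y ∈ U := by
  by_contra hcon
  push Not at hcon
  apply hx
  apply sep_mem hc
  · intro h
    have := congrArg Finset.card h
    simp at this; omega
  · intro y hy
    obtain ⟨U, hU, h1, h2⟩ := hcon y (by simpa using hy)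
    exact ⟨U, hU, by simpa using h1, h2⟩

theorem two_compl_card (i j : Fin k) (h : i ≠ j) : (univ \ {i, j} : Finset (Fin k)).card = k - 2 := by
  rw [card_sdiff_of_subset (subset_univ _), card_pair h]; simp

theorem center_one (hk : 4 ≤ k) (hu : univ ∉ J) (hc : ∀ T1 ∈ J, ∀ T2 ∈ J, T1 ∩ T2 ∈ J)
    (hs : ∀ a b, a ≠ b → {a} ∈ J → {b} ∈ J → False)
    (hcov : ∀ T : Finset (Fin k), T.card = k - 2 → ∃ U ∈ J, T ⊆ U) :
    ∃ c : Fin k, ∀ x, x ≠ c → {c, x} ∈ J := by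
  -- consequence of a missing singleton
  have key : ∀ a, {a} ∉ J → ∃ y, y ≠ a ∧ univ \ {y} ∉ J ∧ ∀ z, z ≠ a → z ≠ y → univ \ {z} ∈ J := by
    intro a ha
    obtain ⟨y, hya, hy⟩ := not_single (by omega) hc ha
    refine ⟨y, hya, fun h => by simpa using hy _ h (by simpa using hya.symm), ?_⟩
    intro z hza hzy
    obtain ⟨U, hU, hTU⟩ := hcov (univ \ {y, z}) (two_compl_card _ _ hzy.symm)
    have hyU : y ∈ U := hy U hU (hTU (by simp [hya.symm, hza.symm]))
    have hzU : z ∉ U := by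
      intro hz
      apply hu
      have : U = univ := by
        apply eq_univ_of_forall
        intro w
        by_cases h1 : w = y
        · rwa [h1]
        by_cases h2 : w = z
        · rwa [h2]
        exact hTU (by simp [h1, h2])
      rwa [← this]
    have : U = univ \ {z} := by
      ext w
      simp only [mem_sdiff, mem_univ, true_and, mem_singleton]
      constructor
      · rintro hw rfl; exact hzU hw
      · intro h2
        by_cases h1 : w = y
        · rwa [h1]
        exact hTU (by simp [h1, h2])
    rwa [← this]
  have ex : ∀ X : Finset (Fin k), X.card ≤ 2 → ∃ b ∉ X, {b} ∉ J := by
    intro X hX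
    have : 2 ≤ (univ \ X).card := by
      rw [card_sdiff_of_subset (subset_univ _)]; simp; omega
    obtain ⟨b1, h1, b2, h2, hne⟩ := one_lt_card.1 this
    by_cases h : {b1} ∈ J
    · exact ⟨b2, by simpa using h2, fun h' => hs _ _ hne h h'⟩
    · exact ⟨b1, by simpa using h1, h⟩
  obtain ⟨a, -, ha⟩ := ex ∅ (by simp)
  obtain ⟨y, hya, hy1, hy2⟩ := key a ha
  obtain ⟨b, hbX, hb⟩ := ex {a, y} card_le_two
  obtain ⟨c, hcb, hc1, hc2⟩ := key b hb
  simp only [mem_insert, mem_singleton, not_or] at hbX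
  have hall : ∀ z, z ≠ c → univ \ {z} ∈ J := by
    intro z hz
    by_cases h : z = b
    · rw [h]; exact hy2 b hbX.1 hbX.2
    · exact hc2 z h hz
  refine ⟨c, fun x hx => sep_mem hc ?_ ?_⟩
  · intro h
    have := congrArg Finset.card h
    have h2 : ({c, x} : Finset (Fin k)).card ≤ 2 := card_le_two
    simp at this; omega
  · intro y hy
    simp only [mem_insert, mem_singleton, not_or] at hy
    refine ⟨_, hall y hy.1, ?_, by simp⟩
    intro w hw
    simp only [mem_insert, mem_singleton] at hw
    simp only [mem_sdiff, mem_univ, true_and, mem_singleton]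
    rintro rfl
    tauto

theorem center_two (hk : 4 ≤ k) (hu : univ ∉ J) (hc : ∀ T1 ∈ J, ∀ T2 ∈ J, T1 ∩ T2 ∈ J)
    (hs : ∀ a, {a} ∉ J)
    (hcov : ∀ T : Finset (Fin k), T.card = k - 3 → ∃ U ∈ J, T ⊆ U) :
    ∃ i j : Fin k, i ≠ j ∧ {i, j} ∈ J ∧
      ((∀ z, z ≠ i → z ≠ j → {i, j, z} ∈ J) ∨ (k = 4 ∧ univ \ {i, j} ∈ J)) := by
  -- an uncovered set
  obtain ⟨T, hTc, hT⟩ : ∃ T : Finset (Fin k), T.card = k - 2 ∧ ∀ U ∈ J, ¬ T ⊆ U := by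
    by_contra hcon
    push Not at hcon
    obtain ⟨c, hcx⟩ := center_one hk hu hc (fun a b _ h => absurd h (hs a)) hcon
    have : 2 ≤ (univ \ {c} : Finset (Fin k)).card := by
      rw [card_sdiff_of_subset (subset_univ _)]; simp; omega
    obtain ⟨b1, h1, b2, h2, hne⟩ := one_lt_card.1 this
    simp only [mem_sdiff, mem_univ, true_and, mem_singleton] at h1 h2
    have := hc _ (hcx b1 h1) _ (hcx b2 h2)
    apply hs c
    convert this using 1
    ext z
    simp only [mem_singleton, mem_inter, mem_insert]
    constructor
    · rintro rfl; simp
    · rintro ⟨h | h, h' | h'⟩ <;> first | assumption | exact absurd (h.symm.trans h') hne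
  have hco : (univ \ T).card = 2 := by
    rw [card_sdiff_of_subset (subset_univ _), hTc]; simp; omega
  obtain ⟨i, j, hij, hTij⟩ := card_eq_two.1 hco
  have hmemT : ∀ z, z ∉ T ↔ z = i ∨ z = j := by
    intro z
    have : z ∈ univ \ T ↔ z ∈ ({i, j} : Finset (Fin k)) := by rw [hTij]
    simpa using this
  have hM : ∀ x, ∃ U, x ∈ T → U ∈ J ∧ T.erase x ⊆ U ∧ x ∉ U := by
    intro x
    by_cases hx : x ∈ T
    · obtain ⟨U, hU, h⟩ := hcov (T.erase x) (by rw [card_erase_of_mem hx, hTc]; omega)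
      refine ⟨U, fun _ => ⟨hU, h, fun hxU => hT U hU ?_⟩⟩
      intro z hz
      by_cases hzx : z = x
      · rwa [hzx]
      · exact h (mem_erase.2 ⟨hzx, hz⟩)
    · exact ⟨∅, fun h => absurd h hx⟩
  choose M hM using hM
  have star : ∀ x ∈ T, ∃ y, (y = i ∨ y = j) ∧ ∀ z ∈ T, z ≠ x → y ∈ M z := by
    intro x hx
    obtain ⟨y, hyx, hy⟩ := not_single (by omega) hc (hs x)
    refine ⟨y, (hmemT y).1 ?_, ?_⟩
    · intro hyT
      exact (hM y hyT).2.2 (hy _ (hM y hyT).1 ((hM y hyT).2.1 (mem_erase.2 ⟨hyx.symm, hx⟩)))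
    · intro z hz hzx
      exact hy _ (hM z hz).1 ((hM z hz).2.1 (mem_erase.2 ⟨hzx.symm, hx⟩))
  -- centered case
  have cent : ∀ p q, p ∉ T → q ∉ T → (∀ z, z ∉ T ↔ z = p ∨ z = q) → (∀ z ∈ T, p ∈ M z) →
      ∀ z ∈ T, q ∈ M z := by
    intro p q hp hq hpq h
    obtain ⟨y, hyx, hy⟩ := not_single (by omega) hc (hs p)
    have hyT : y ∉ T := fun hyT => (hM y hyT).2.2 (hy _ (hM y hyT).1 (h y hyT))
    have : y = q := by
      rcases (hpq y).1 hyT with h | h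
      · exact absurd h hyx
      · exact h
    subst this
    exact fun z hz => hy _ (hM z hz).1 (h z hz)
  have hiT : i ∉ T := (hmemT i).2 (Or.inl rfl)
  have hjT : j ∉ T := (hmemT j).2 (Or.inr rfl)
  by_cases hcase : (∀ z ∈ T, i ∈ M z) ∨ (∀ z ∈ T, j ∈ M z)
  · have hboth : (∀ z ∈ T, i ∈ M z) ∧ (∀ z ∈ T, j ∈ M z) := by
      rcases hcase with h | h
      · exact ⟨h, cent i j hiT hjT hmemT h⟩
      · exact ⟨cent j i hjT hiT (fun z => (hmemT z).trans or_comm) h, h⟩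
    have gen : ∀ A : Finset (Fin k), i ∈ A → j ∈ A → A.card < k → A ∈ J := by
      intro A hiA hjA hAc
      apply sep_mem hc
      · rintro rfl; simp at hAc
      · intro y hy
        have hyT : y ∈ T := by
          by_contra h
          rcases (hmemT y).1 h with rfl | rfl <;> contradiction
        refine ⟨M y, (hM y hyT).1, ?_, (hM y hyT).2.2⟩
        intro w hw
        by_cases hwT : w ∈ T
        · exact (hM y hyT).2.1 (mem_erase.2 ⟨by rintro rfl; exact hy hw, hwT⟩)
        · rcases (hmemT w).1 hwT with rfl | rfl
          · exact hboth.1 y hyT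
          · exact hboth.2 y hyT
    refine ⟨i, j, hij, gen _ (by simp) (by simp) ?_, Or.inl fun z _ _ => gen _ (by simp) (by simp) ?_⟩
    · exact card_le_two.trans_lt (by omega)
    · exact card_le_three.trans_lt (by omega)
  · push Not at hcase
    obtain ⟨⟨a, haT, ha⟩, ⟨b, hbT, hb⟩⟩ := hcase
    have hab : a ≠ b := by
      rintro rfl
      obtain ⟨x, hx, hxa⟩ : ∃ x ∈ T, x ≠ a := by
        have : 1 < T.card := by omega
        exact exists_mem_ne this a
      obtain ⟨y, hy, h⟩ := star x hx
      have := h a haT hxa.symm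
      rcases hy with rfl | rfl <;> contradiction
    have hTab : T = {a, b} := by
      apply Subset.antisymm
      · intro x hx
        by_contra hcon
        simp only [mem_insert, mem_singleton, not_or] at hcon
        obtain ⟨y, hy, h⟩ := star x hx
        have h1 := h a haT (Ne.symm hcon.1)
        have h2 := h b hbT (Ne.symm hcon.2)
        rcases hy with rfl | rfl <;> contradiction
      · intro x hx
        simp only [mem_insert, mem_singleton] at hx
        rcases hx with rfl | rfl <;> assumption
    have hk4 : k = 4 := by
      rw [hTab, card_pair hab] at hTc; omega
    have hja : j ∈ M a := by
      obtain ⟨y, hy, h⟩ := star b hbT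
      have h1 := h a haT hab
      rcases hy with rfl | rfl
      · contradiction
      · exact h1
    have hib : i ∈ M b := by
      obtain ⟨y, hy, h⟩ := star a haT
      have h1 := h b hbT hab.symm
      rcases hy with rfl | rfl
      · exact h1
      · contradiction
    have hall : ∀ z, z = a ∨ z = b ∨ z = i ∨ z = j := by
      intro z
      by_cases hz : z ∈ T
      · rw [hTab] at hz; simp at hz; tauto
      · have := (hmemT z).1 hz; tauto
    have hbMa : b ∈ M a := (hM a haT).2.1 (mem_erase.2 ⟨hab.symm, hbT⟩)
    have haMb : a ∈ M b := (hM b hbT).2.1 (mem_erase.2 ⟨hab, haT⟩)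
    have hMa : M a = {b, j} := by
      ext z
      simp only [mem_insert, mem_singleton]
      constructor
      · intro hz
        rcases hall z with rfl | rfl | rfl | rfl
        · exact absurd hz (hM _ haT).2.2
        · simp
        · contradiction
        · simp
      · rintro (rfl | rfl) <;> assumption
    have hMb : M b = univ \ {b, j} := by
      ext z
      simp only [mem_insert, mem_singleton, mem_sdiff, mem_univ, true_and, not_or]
      constructor
      · intro hz
        exact ⟨by rintro rfl; exact (hM _ hbT).2.2 hz, by rintro rfl; contradiction⟩
      · rintro ⟨h1, h2⟩
        rcases hall z with rfl | rfl | rfl | rfl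
        · exact haMb
        · contradiction
        · exact hib
        · contradiction
    refine ⟨b, j, by rintro rfl; contradiction, hMa ▸ (hM a haT).1, Or.inr ⟨hk4, hMb ▸ (hM b hbT).1⟩⟩
end comb


theorem crude (k l : ℕ) (hk : 4 ≤ k) : ∃ C : ℕ, ∀ (α : Type) [Fintype α] [DecidableEq α]
    (F : Finset (Finset α)), (∀ E ∈ F, E.card = k) → ¬ HasLPath F (l + 1) →
    ∀ X : Finset (Finset α), (∀ E ∈ F, ∀ x ∈ E, E.erase x ∈ X) → F.card ≤ C * X.card := by
  obtain ⟨C, hC⟩ := furedi k (2 * k + (l + 1) * k) (by omega)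
  refine ⟨C, ?_⟩
  intro α _ _ F hF hP X hX
  obtain ⟨χ, H, J, hHF, hFC, hom⟩ := hC α F hF
  refine hFC.trans (Nat.mul_le_mul_left _ ?_)
  rcases H.eq_empty_or_nonempty with rfl | hne
  · simp
  have hcl : ∀ T1 ∈ J, ∀ T2 ∈ J, T1 ∩ T2 ∈ J := fun T1 h1 T2 h2 => hom.closed hne (by omega) h1 h2
  have : ∃ c, univ \ {c} ∉ J := by
    by_contra hcon
    push Not at hcon
    have hsing : ∀ a, {a} ∈ J := by
      intro a
      apply sep_mem hcl
      · intro h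
        have := congrArg Finset.card h
        simp at this; omega
      · intro y hy
        refine ⟨_, hcon y, ?_, by simp⟩
        simp only [mem_singleton] at hy
        simpa using Ne.symm hy
    exact hP ((hom.two_single hne (a := ⟨0, by omega⟩) (b := ⟨1, by omega⟩) (by simp)
      (hsing _) (hsing _) l (by omega)).mono hHF)
  obtain ⟨c, hc⟩ := this
  have hT : ∀ U ∈ J, ¬ (univ \ {c}) ⊆ U := by
    intro U hU hcU
    by_cases h : c ∈ U
    · apply hom.2.1
      convert hU
      symm
      apply eq_univ_of_forall
      intro w
      by_cases hw : w = c
      · rwa [hw]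
      · exact hcU (by simp [hw])
    · apply hc
      convert hU
      apply Subset.antisymm hcU
      intro w hw
      simp only [mem_sdiff, mem_univ, true_and, mem_singleton]
      rintro rfl; exact h hw
  apply card_le_card_of_injOn _ _ (hom.own_inj hT)
  intro E hE
  have hE' : E ∈ H := hE
  obtain ⟨x, hx, hxc⟩ := exists_color (hom.1 E hE').1 (hom.1 E hE').2 c
  have : cproj χ (univ \ {c}) E = E.erase x := by
    ext z
    simp only [cproj, mem_filter, mem_sdiff, mem_univ, true_and, mem_singleton, mem_erase]
    constructor
    · rintro ⟨h1, h2⟩; exact ⟨by rintro rfl; exact h2 hxc, h1⟩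
    · rintro ⟨h1, h2⟩; exact ⟨h2, fun h => h1 ((hom.1 E hE').2 h2 hx (h.trans hxc.symm))⟩
  rw [this]
  exact hX E (hHF hE') x hx

def GoodOne {α : Type} [DecidableEq α] (F : Finset (Finset α)) (s : ℕ) (E : Finset α) : Prop :=
  ∃ v ∈ E, ∀ x ∈ E, x ≠ v → Ker F s {v, x}

def GoodTwo {α : Type} [DecidableEq α] (k : ℕ) (F : Finset (Finset α)) (s : ℕ) (E : Finset α) : Prop :=
  ∃ p ⊆ E, p.card = 2 ∧ Ker F s p ∧
    ((∀ x ∈ E, x ∉ p → Ker F s (insert x p)) ∨ (k = 4 ∧ Ker F s (E \ p)))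

theorem cproj_pair {α : Type} [DecidableEq α] {k : ℕ} {χ : α → Fin k} {E : Finset α}
    (hi : Set.InjOn χ E) {x y : α} (hx : x ∈ E) (hy : y ∈ E) : cproj χ {χ x, χ y} E = {x, y} :=
  (eq_cproj_of_image hi (by intro z hz; simp at hz; rcases hz with rfl | rfl <;> assumption)
    (by simp [image_insert])).symm

open Classical in
theorem good_one (k l s : ℕ) (hk : 4 ≤ k) (hs : 2 * k ≤ s) (hs2 : (l + 1) * k ≤ s) :
    ∃ C : ℕ, ∀ (α : Type) [Fintype α] [DecidableEq α]
    (V : Finset α) (F : Finset (Finset α)), (∀ E ∈ F, E ⊆ V ∧ E.card = k) → ¬ HasLPath F (l + 1) →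
    (F.filter (fun E => ¬ GoodOne F s E)).card ≤ C * V.card ^ (k - 2) := by
  obtain ⟨C, hC⟩ := furedi k s (by omega)
  refine ⟨C, ?_⟩
  intro α _ _ V F hF hP
  obtain ⟨χ, H, J, hHF, hFC, hom⟩ := hC α (F.filter (fun E => ¬ GoodOne F s E))
    (fun E hE => (hF E (mem_filter.1 hE).1).2)
  refine hFC.trans (Nat.mul_le_mul_left _ ?_)
  rcases H.eq_empty_or_nonempty with rfl | hne
  · simp
  have hHF' : H ⊆ F := hHF.trans (filter_subset _ _)
  have hcl : ∀ T1 ∈ J, ∀ T2 ∈ J, T1 ∩ T2 ∈ J := fun T1 h1 T2 h2 => hom.closed hne (by omega) h1 h2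
  by_cases hcov : ∀ T : Finset (Fin k), T.card = k - 2 → ∃ U ∈ J, T ⊆ U
  · exfalso
    obtain ⟨c, hc⟩ := center_one hk hom.2.1 hcl (fun a b hab ha hb =>
      hP ((hom.two_single hne hab ha hb l (by omega)).mono hHF')) hcov
    obtain ⟨E, hE⟩ := hne
    have hi := (hom.1 E hE).2
    apply (mem_filter.1 (hHF hE)).2
    obtain ⟨v, hv, hvc⟩ := exists_color (hom.1 E hE).1 hi c
    refine ⟨v, hv, fun x hx hxv => ?_⟩
    rw [← cproj_pair hi hv hx, hvc]
    apply Ker.mono _ hHF' le_rfl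
    apply hom.2.2.1 _ _ _ hE
    apply hc
    intro h
    exact hxv (hi hx hv (h.trans hvc.symm))
  · push Not at hcov
    obtain ⟨T, hT, hTU⟩ := hcov
    rw [← hT]
    exact hom.own (fun E hE => (hF E (hHF' hE)).1) hTU

open Classical in
theorem good_two (k s : ℕ) (hk : 4 ≤ k) (hs : 2 * k ≤ s) :
    ∃ C : ℕ, ∀ (α : Type) [Fintype α] [DecidableEq α]
    (V : Finset α) (F : Finset (Finset α)), (∀ E ∈ F, E ⊆ V ∧ E.card = k) → ¬ HasLPath F 2 →
    (F.filter (fun E => ¬ GoodTwo k F s E)).card ≤ C * V.card ^ (k - 3) := by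
  obtain ⟨C, hC⟩ := furedi k s (by omega)
  refine ⟨C, ?_⟩
  intro α _ _ V F hF hP
  obtain ⟨χ, H, J, hHF, hFC, hom⟩ := hC α (F.filter (fun E => ¬ GoodTwo k F s E))
    (fun E hE => (hF E (mem_filter.1 hE).1).2)
  refine hFC.trans (Nat.mul_le_mul_left _ ?_)
  rcases H.eq_empty_or_nonempty with rfl | hne
  · simp
  have hHF' : H ⊆ F := hHF.trans (filter_subset _ _)
  have hcl : ∀ T1 ∈ J, ∀ T2 ∈ J, T1 ∩ T2 ∈ J := fun T1 h1 T2 h2 => hom.closed hne (by omega) h1 h2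
  by_cases hcov : ∀ T : Finset (Fin k), T.card = k - 3 → ∃ U ∈ J, T ⊆ U
  · exfalso
    obtain ⟨i, j, hij, hpJ, hor⟩ := center_two hk hom.2.1 hcl (fun a ha =>
      hP ((hom.one_single hne ha (by omega)).mono hHF')) hcov
    obtain ⟨E, hE⟩ := hne
    have hi := (hom.1 E hE).2
    have hEc := (hom.1 E hE).1
    apply (mem_filter.1 (hHF hE)).2
    refine ⟨cproj χ {i, j} E, filter_subset _ _, ?_, (hom.2.2.1 _ hpJ _ hE).mono hHF' le_rfl, ?_⟩
    · rw [cproj_card hEc hi, card_pair hij]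
    · rcases hor with h | ⟨h4, h⟩
      · left
        intro x hx hxp
        simp only [cproj, mem_filter, hx, true_and, mem_insert, mem_singleton, not_or] at hxp
        have hJ := h (χ x) hxp.1 hxp.2
        have : insert x (cproj χ {i, j} E) = cproj χ {i, j, χ x} E := by
          ext z
          simp only [cproj, mem_insert, mem_filter, mem_singleton]
          constructor
          · rintro (rfl | ⟨h1, h2⟩)
            · simp [hx]
            · tauto
          · rintro ⟨h1, h2 | h2 | h2⟩
            · tauto
            · tauto
            · left; exact hi h1 hx h2
        rw [this]
        exact (hom.2.2.1 _ hJ _ hE).mono hHF' le_rfl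
      · right
        refine ⟨h4, ?_⟩
        have : E \ cproj χ {i, j} E = cproj χ (univ \ {i, j}) E := by
          ext z
          simp only [cproj, mem_sdiff, mem_filter, mem_univ, true_and]
          tauto
        rw [this]
        exact (hom.2.2.1 _ h _ hE).mono hHF' le_rfl
  · push Not at hcov
    obtain ⟨T, hT, hTU⟩ := hcov
    rw [← hT]
    exact hom.own (fun E hE => (hF E (hHF' hE)).1) hTU

theorem crude_two (k : ℕ) (hk : 4 ≤ k) : ∃ C : ℕ, ∀ (α : Type) [Fintype α] [DecidableEq α]
    (V : Finset α) (F : Finset (Finset α)), (∀ E ∈ F, E ⊆ V ∧ E.card = k) → ¬ HasLPath F 2 →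
    F.card ≤ C * V.card ^ (k - 2) := by
  obtain ⟨C, hC⟩ := furedi k (2 * k) (by omega)
  refine ⟨C, ?_⟩
  intro α _ _ V F hF hP
  obtain ⟨χ, H, J, hHF, hFC, hom⟩ := hC α F (fun E hE => (hF E hE).2)
  refine hFC.trans (Nat.mul_le_mul_left _ ?_)
  rcases H.eq_empty_or_nonempty with rfl | hne
  · simp
  have hcl : ∀ T1 ∈ J, ∀ T2 ∈ J, T1 ∩ T2 ∈ J := fun T1 h1 T2 h2 => hom.closed hne (by omega) h1 h2
  have hs : ∀ a, {a} ∉ J := fun a ha => hP ((hom.one_single hne ha (by omega)).mono hHF)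
  by_cases hcov : ∀ T : Finset (Fin k), T.card = k - 2 → ∃ U ∈ J, T ⊆ U
  · exfalso
    obtain ⟨c, hcx⟩ := center_one hk hom.2.1 hcl (fun a b _ h => absurd h (hs a)) hcov
    have : 2 ≤ (univ \ {c} : Finset (Fin k)).card := by
      rw [card_sdiff_of_subset (subset_univ _)]; simp; omega
    obtain ⟨b1, h1, b2, h2, hne⟩ := one_lt_card.1 this
    simp only [mem_sdiff, mem_univ, true_and, mem_singleton] at h1 h2
    have := hcl _ (hcx b1 h1) _ (hcx b2 h2)
    apply hs c
    convert this using 1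
    ext z
    simp only [mem_singleton, mem_inter, mem_insert]
    constructor
    · rintro rfl; simp
    · rintro ⟨h | h, h' | h'⟩ <;> first | assumption | exact absurd (h.symm.trans h') hne
  · push Not at hcov
    obtain ⟨T, hT, hTU⟩ := hcov
    rw [← hT]
    exact hom.own (fun E hE => (hF E (hHF hE)).1) hTU


theorem bern (b n r : ℕ) : n ^ (r+1) ≤ (n - b) ^ (r+1) + (r+1) * b * n ^ r := by
  induction r with
  | zero => simp; omega
  | succ r ih =>
    have h1 : n ≤ (n - b) + b := by omega
    have h2 : (n - b) ^ (r+1) ≤ n ^ (r+1) := Nat.pow_le_pow_left (by omega) _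
    calc n ^ (r+1+1) = n * n ^ (r+1) := by ring
      _ ≤ n * ((n - b) ^ (r+1) + (r+1) * b * n ^ r) := Nat.mul_le_mul_left _ ih
      _ = n * (n - b) ^ (r+1) + (r+1) * b * n ^ (r+1) := by ring
      _ ≤ ((n - b) + b) * (n - b) ^ (r+1) + (r+1) * b * n ^ (r+1) := by gcongr
      _ = (n - b) ^ (r+1+1) + b * (n - b) ^ (r+1) + (r+1) * b * n ^ (r+1) := by ring
      _ ≤ (n - b) ^ (r+1+1) + b * n ^ (r+1) + (r+1) * b * n ^ (r+1) := by gcongr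
      _ = _ := by ring

theorem pow_low (a n r : ℕ) :
    n ^ (r+1) ≤ (r+1).factorial * (n - a).choose (r+1) + (r+1) * (r + 1 + a) * n ^ r := by
  have h1 := bern (r+1+a) n r
  have h2 : (n - (r+1+a)) ^ (r+1) ≤ (n - a + 1 - (r+1)) ^ (r+1) := Nat.pow_le_pow_left (by omega) _
  have h3 := Nat.pow_sub_le_descFactorial (n - a) (r+1)
  rw [Nat.descFactorial_eq_factorial_mul_choose] at h3
  omega

theorem choose_up (N r : ℕ) : r.factorial * N.choose r ≤ N ^ r := by
  rw [← Nat.descFactorial_eq_factorial_mul_choose]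
  exact Nat.descFactorial_le_pow _ _

theorem choose_tele (M m r : ℕ) : M.choose (r+1) + m * M.choose r ≤ (M + m).choose (r+1) := by
  induction m with
  | zero => simp
  | succ m ih =>
    have : (M + (m+1)).choose (r+1) = (M+m).choose r + (M+m).choose (r+1) := rfl
    rw [this]
    have h := Nat.choose_le_choose r (show M ≤ M + m by omega)
    nlinarith

/-- `r = r' + 2` -/
theorem clean_ineq (r C : ℕ) : ∃ q n0 : ℕ, 2 ≤ q ∧ ∀ n ≥ n0, ∀ a ≤ 2, ∀ m X : ℕ, q * m ≤ n →
    q * X ≤ C * m * n ^ (r+1) →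
    (n - a - m).choose (r+2) + C * m * n ^ r + X ≤ (n - a).choose (r+2) := by
  set K := (r+1).factorial * 4 ^ (r+1) with hK
  have hKpos : 0 < K := by positivity
  refine ⟨2 * K * C + 2, 2 * K * C + 4 * (r + 4), by omega, ?_⟩
  intro n hn a ha m X hm hX
  have h2m : 2 * m ≤ n := le_trans (by nlinarith [Nat.zero_le (2*K*C*m)]) hm
  obtain ⟨M, hM⟩ : ∃ M, n - a = M + m := ⟨n - a - m, by omega⟩
  have hMe : n - a - m = M := by omega
  rw [hMe, hM]
  refine le_trans ?_ (choose_tele M m (r+1))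
  have hlow : n ^ (r+1) ≤ K * M.choose (r+1) := by
    have h1 : n ^ (r+1) ≤ (4 * (M + 1 - (r+1))) ^ (r+1) := Nat.pow_le_pow_left (by omega) _
    have h3 := Nat.pow_sub_le_descFactorial M (r+1)
    rw [Nat.descFactorial_eq_factorial_mul_choose] at h3
    calc _ ≤ _ := h1
      _ = 4 ^ (r+1) * (M + 1 - (r+1)) ^ (r+1) := by rw [mul_pow]
      _ ≤ 4 ^ (r+1) * ((r+1).factorial * M.choose (r+1)) := Nat.mul_le_mul_left _ h3
      _ = _ := by rw [hK]; ring
  have e1 : 2 * K * (C * m * n ^ r) ≤ m * n ^ (r+1) := by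
    calc 2 * K * (C * m * n ^ r) = (2 * K * C) * (m * n ^ r) := by ring
      _ ≤ n * (m * n ^ r) := Nat.mul_le_mul_right _ (by omega)
      _ = _ := by ring
  have e2 : 2 * K * X ≤ m * n ^ (r+1) := by
    rcases Nat.eq_zero_or_pos C with h | h
    · subst h
      have : X = 0 := by
        simp at hX; omega
      subst this; simp
    · have : C * (2 * K * X) ≤ C * (m * n ^ (r+1)) := by
        calc C * (2 * K * X) ≤ (2 * K * C + 2) * X := by nlinarith
          _ ≤ _ := hX
          _ = _ := by ring
      exact Nat.le_of_mul_le_mul_left this h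
  have e3 : m * n ^ (r+1) ≤ m * (K * M.choose (r+1)) := Nat.mul_le_mul_left _ hlow
  have e4 : (2 * K) * (C * m * n ^ r + X) ≤ (2 * K) * (m * M.choose (r+1)) := by
    nlinarith
  have := Nat.le_of_mul_le_mul_left e4 (by omega)
  have e5 : M.choose (r+2) = M.choose (r+1+1) := rfl
  omega

open Classical in
noncomputable def NTwo {α : Type} [DecidableEq α] (V : Finset α) (F : Finset (Finset α)) (s : ℕ)
    (p : Finset α) : Finset α := V.filter (fun x => x ∉ p ∧ Ker F s (insert x p))

/-- `k = r + 3` -/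
theorem stab_two (k s q : ℕ) (hk : 4 ≤ k) (hs : 2 * k ≤ s) (hq : 2 ≤ q) :
    ∃ n0 : ℕ, ∀ (α : Type) [Fintype α] [DecidableEq α] (V : Finset α) (F : Finset (Finset α)),
    (∀ E ∈ F, E ⊆ V ∧ E.card = k) → ¬ HasLPath F 2 → n0 ≤ V.card →
    (V.card - 2).choose (k - 2) ≤ F.card →
    ∃ p ⊆ V, p.card = 2 ∧ Ker F s p ∧ q * (V.card - 2 - (NTwo V F s p).card) ≤ V.card := by
  classical
  obtain ⟨C, hC⟩ := good_two k s hk hs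
  obtain ⟨r, rfl⟩ : ∃ r, k = r + 4 := ⟨k - 4, by omega⟩
  set R := (r+2).factorial with hR
  refine ⟨q * (R * C + (r+2) * (r + 2 + 2)) + 1, ?_⟩
  intro α _ _ V F hF hP hn hFc
  by_contra hcon
  push Not at hcon
  set n := V.card with hnV
  set N := NTwo V F s with hN
  set Q := (powersetCard 2 V).filter (fun p => Ker F s p) with hQ
  have hQm : ∀ p ∈ Q, p ⊆ V ∧ p.card = 2 ∧ Ker F s p := by
    intro p hp
    rw [hQ, mem_filter, mem_powersetCard] at hp
    tauto
  have hNm : ∀ p x, x ∈ N p → x ∈ V ∧ x ∉ p ∧ Ker F s (insert x p) := by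
    intro p x hx
    simpa [hN, NTwo] using hx
  have hNc : ∀ p ∈ Q, q * (N p).card + n ≤ q * n := by
    intro p hp
    obtain ⟨h1, h2, h3⟩ := hQm p hp
    have := hcon p h1 h2 h3
    have hle : (N p).card ≤ n - 2 := by
      by_contra h
      rw [Nat.sub_eq_zero_of_le (by omega)] at this
      omega
    calc q * (N p).card + n ≤ q * (N p).card + q * (n - 2 - (N p).card) := by omega
      _ = q * ((N p).card + (n - 2 - (N p).card)) := by ring
      _ ≤ q * n := Nat.mul_le_mul_left _ (by omega)
  -- disjointness
  have hk2 : ∀ {A B : Finset α}, Ker F s A → Ker F s B → B.card ≤ 3 → (A ∩ B).card = 1 → False := by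
    intro A B hA hB h3 h1
    exact hP (two_ker (fun E hE => (hF E hE).2) hA hB (by omega) (by omega) h1)
  have hdisj : ∀ p ∈ Q, ∀ p' ∈ Q, p ≠ p' → Disjoint (p ∪ N p) (p' ∪ N p') := by
    intro p hp p' hp' hne
    obtain ⟨a1, a2, a3⟩ := hQm p hp
    obtain ⟨b1, b2, b3⟩ := hQm p' hp'
    have hpp : p ∩ p' = ∅ := by
      rw [← card_eq_zero]
      have h0 : (p ∩ p').card ≠ 1 := fun h => hk2 a3 b3 (by omega) h
      have h2 : (p ∩ p').card ≠ 2 := by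
        intro h
        have e1 : p ∩ p' = p := eq_of_subset_of_card_le inter_subset_left (by omega)
        have e2 : p ∩ p' = p' := eq_of_subset_of_card_le inter_subset_right (by omega)
        exact hne (e1.symm.trans e2)
      have := card_le_card (inter_subset_left : p ∩ p' ⊆ p)
      omega
    have hpp' : ∀ z, z ∈ p → z ∈ p' → False := by
      intro z h1 h2
      have : z ∈ p ∩ p' := mem_inter.2 ⟨h1, h2⟩
      rw [hpp] at this; simp at this
    rw [disjoint_left]
    intro z hz hz'
    rcases mem_union.1 hz with h | h <;> rcases mem_union.1 hz' with h' | h'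
    · exact hpp' z h h'
    · obtain ⟨c1, c2, c3⟩ := hNm _ _ h'
      refine hk2 c3 a3 (by omega) (card_eq_one.2 ⟨z, ?_⟩)
      ext w
      simp only [mem_inter, mem_insert, mem_singleton]
      constructor
      · rintro ⟨rfl | h1, h2⟩
        · rfl
        · exact (hpp' w h2 h1).elim
      · rintro rfl; exact ⟨Or.inl rfl, h⟩
    · obtain ⟨c1, c2, c3⟩ := hNm _ _ h
      refine hk2 c3 b3 (by omega) (card_eq_one.2 ⟨z, ?_⟩)
      ext w
      simp only [mem_inter, mem_insert, mem_singleton]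
      constructor
      · rintro ⟨rfl | h1, h2⟩
        · rfl
        · exact (hpp' w h1 h2).elim
      · rintro rfl; exact ⟨Or.inl rfl, h'⟩
    · obtain ⟨c1, c2, c3⟩ := hNm _ _ h
      obtain ⟨d1, d2, d3⟩ := hNm _ _ h'
      refine hk2 c3 d3 ((card_insert_le _ _).trans (by omega)) (card_eq_one.2 ⟨z, ?_⟩)
      ext w
      simp only [mem_inter, mem_insert, mem_singleton]
      constructor
      · rintro ⟨rfl | h1, h2 | h2⟩
        · rfl
        · rfl
        · exact h2
        · exact (hpp' w h1 h2).elim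
      · rintro rfl; exact ⟨Or.inl rfl, Or.inl rfl⟩
  have hsum : ∑ p ∈ Q, (N p).card + 2 * Q.card ≤ n := by
    have h1 : ∑ p ∈ Q, (p ∪ N p).card ≤ n := by
      rw [← card_biUnion hdisj]
      apply card_le_card
      intro z hz
      obtain ⟨p, hp, hz⟩ := mem_biUnion.1 hz
      rcases mem_union.1 hz with h | h
      · exact (hQm p hp).1 h
      · exact (hNm _ _ h).1
    have h2 : ∑ p ∈ Q, (p ∪ N p).card = ∑ p ∈ Q, ((N p).card + 2) := by
      apply sum_congr rfl
      intro p hp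
      rw [card_union_of_disjoint, (hQm p hp).2.1, add_comm]
      rw [disjoint_left]
      intro z h1 h2
      exact (hNm _ _ h2).2.1 h1
    rw [h2, sum_add_distrib, sum_const, smul_eq_mul] at h1
    omega
  -- counting
  set B := F.filter (fun E => ¬ GoodTwo (r+4) F s E) with hB
  have hBc : B.card ≤ C * n ^ (r+1) := hC α V F hF hP
  set X1 := Q.biUnion (fun p => (powersetCard (r+2) (N p)).image (fun A => A ∪ p)) with hX1
  set X2 := if r = 0 then (Q ×ˢ Q).image (fun z => z.1 ∪ z.2) else ∅ with hX2
  have hcov : F ⊆ B ∪ (X1 ∪ X2) := by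
    intro E hE
    by_cases hG : GoodTwo (r+4) F s E
    swap
    · exact mem_union_left _ (mem_filter.2 ⟨hE, hG⟩)
    apply mem_union_right
    obtain ⟨p, hpE, hp2, hpK, hor⟩ := hG
    obtain ⟨hEV, hEc⟩ := hF E hE
    have hpQ : p ∈ Q := by
      rw [hQ, mem_filter, mem_powersetCard]; exact ⟨⟨hpE.trans hEV, hp2⟩, hpK⟩
    have hsd : (E \ p).card = r + 2 := by rw [card_sdiff_of_subset hpE]; omega
    rcases hor with h | ⟨h4, h⟩
    · apply mem_union_left
      refine mem_biUnion.2 ⟨p, hpQ, mem_image.2 ⟨E \ p, ?_, sdiff_union_of_subset hpE⟩⟩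
      rw [mem_powersetCard]
      refine ⟨?_, hsd⟩
      intro x hx
      rw [mem_sdiff] at hx
      simp only [hN, NTwo, mem_filter]
      exact ⟨hEV hx.1, hx.2, h x hx.1 hx.2⟩
    · apply mem_union_right
      have hr : r = 0 := by omega
      rw [hX2, if_pos hr]
      refine mem_image.2 ⟨(p, E \ p), mem_product.2 ⟨hpQ, ?_⟩, union_sdiff_of_subset hpE⟩
      rw [hQ, mem_filter, mem_powersetCard]
      exact ⟨⟨sdiff_subset.trans hEV, by show (E \ p).card = 2; omega⟩, h⟩
  have hX1c : R * X1.card ≤ ∑ p ∈ Q, (N p).card ^ (r+2) := by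
    calc R * X1.card ≤ R * ∑ p ∈ Q, ((N p).card).choose (r+2) := by
          apply Nat.mul_le_mul_left
          refine card_biUnion_le.trans (sum_le_sum fun p _ => card_image_le.trans ?_)
          rw [card_powersetCard]
      _ = ∑ p ∈ Q, R * ((N p).card).choose (r+2) := mul_sum _ _ _
      _ ≤ _ := sum_le_sum fun p _ => choose_up _ _
  have hX1q : q * ∑ p ∈ Q, (N p).card ^ (r+2) ≤ (q - 1) * n ^ (r+1) * ∑ p ∈ Q, (N p).card := by
    rw [mul_sum, mul_sum]
    apply sum_le_sum
    intro p hp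
    have h1 := hNc p hp
    have h2 : q * (N p).card ≤ (q - 1) * n := by
      rw [Nat.sub_mul, one_mul]; omega
    have h3 : (N p).card ≤ n := card_le_card (filter_subset _ _)
    calc q * (N p).card ^ (r+2) = (q * (N p).card) * (N p).card ^ r * (N p).card := by ring
      _ ≤ ((q-1) * n) * n ^ r * (N p).card := by gcongr
      _ = _ := by ring
  have hX2q : q * (R * X2.card) ≤ (q - 1) * n ^ (r+1) * (2 * Q.card) := by
    by_cases hr : r = 0
    · subst hr
      have hc : X2.card ≤ Q.card * Q.card := by
        rw [hX2, if_pos rfl]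
        exact card_image_le.trans (by rw [card_product])
      have hR2 : R = 2 := by rw [hR]; rfl
      rw [hR2]
      have h1 : 2 * Q.card ≤ n := by omega
      have h2 : q ≤ 2 * (q - 1) := by omega
      calc q * (2 * X2.card) ≤ q * (2 * (Q.card * Q.card)) := by gcongr
        _ = q * ((2 * Q.card) * Q.card) := by ring
        _ ≤ (2 * (q - 1)) * (n * Q.card) := by gcongr
        _ = _ := by ring
    · rw [hX2, if_neg hr]; simp
  have hFle : F.card ≤ B.card + (X1.card + X2.card) :=
    (card_le_card hcov).trans ((card_union_le _ _).trans (by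
      have := card_union_le X1 X2; omega))
  have hlow := pow_low 2 n (r+1)
  have hFc' : (n - 2).choose (r + 1 + 1) ≤ F.card := hFc
  have f1 : q * (R * F.card) ≤ q * R * C * n ^ (r+1) + (q - 1) * n ^ (r+1) * n := by
    calc q * (R * F.card) ≤ q * (R * (B.card + (X1.card + X2.card))) := by gcongr
      _ = q * R * B.card + q * (R * X1.card) + q * (R * X2.card) := by ring
      _ ≤ q * R * (C * n ^ (r+1)) + (q - 1) * n ^ (r+1) * ∑ p ∈ Q, (N p).card
          + (q - 1) * n ^ (r+1) * (2 * Q.card) := by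
          exact Nat.add_le_add (Nat.add_le_add (Nat.mul_le_mul_left _ hBc) ((Nat.mul_le_mul_left _ hX1c).trans hX1q)) hX2q
      _ = q * R * C * n ^ (r+1) + (q - 1) * n ^ (r+1) * (∑ p ∈ Q, (N p).card + 2 * Q.card) := by ring
      _ ≤ _ := by gcongr
  have f2 : q * n ^ (r+2) ≤ q * (R * F.card) + q * ((r+2) * (r+2+2) * n ^ (r+1)) := by
    rw [← mul_add]
    apply Nat.mul_le_mul_left
    refine hlow.trans ?_
    have : R * (n - 2).choose (r + 1 + 1) ≤ R * F.card := Nat.mul_le_mul_left _ hFc'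
    exact Nat.add_le_add_right this _
  obtain ⟨q', rfl⟩ : ∃ q', q = q' + 1 := ⟨q - 1, by omega⟩
  rw [Nat.add_sub_cancel] at f1
  have f3 : n * n ^ (r+1) ≤ ((q'+1) * (R * C + (r+2) * (r + 2 + 2))) * n ^ (r+1) := by
    have e : n ^ (r+2) = n * n ^ (r+1) := by ring
    rw [e] at f2
    nlinarith
  have hnpos : 0 < n := by omega
  have := Nat.le_of_mul_le_mul_right f3 (by positivity)
  omega


theorem base_upper (k : ℕ) (hk : 4 ≤ k) :
    ∃ n0 : ℕ, ∀ (α : Type) [Fintype α] [DecidableEq α] (V : Finset α) (F : Finset (Finset α)),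
    (∀ E ∈ F, E ⊆ V ∧ E.card = k) → ¬ HasLPath F 2 → n0 ≤ V.card →
    F.card ≤ (V.card - 2).choose (k - 2) := by
  classical
  obtain ⟨C2, hC2⟩ := crude_two k hk
  obtain ⟨r, rfl⟩ : ∃ r, k = r + 4 := ⟨k - 4, by omega⟩
  set s := 2 * (r + 4) with hs
  obtain ⟨q, n1, hq, hcl⟩ := clean_ineq r (s + C2)
  obtain ⟨n2, hst⟩ := stab_two (r+4) s q hk (by omega) hq
  refine ⟨n1 + n2, ?_⟩
  intro α _ _ V F hF hP hn
  by_contra hcon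
  push Not at hcon
  obtain ⟨p, hpV, hp2, hpK, hpq⟩ := hst α V F hF hP (by omega) hcon.le
  set n := V.card with hnd
  set N := NTwo V F s p with hN
  set B := (V \ p) \ N with hB
  have hNsub : N ⊆ V \ p := by
    intro x hx
    simp only [hN, NTwo, mem_filter] at hx
    exact mem_sdiff.2 ⟨hx.1, hx.2.1⟩
  have hVp : (V \ p).card = n - 2 := by rw [card_sdiff_of_subset hpV, hp2]
  have hBc : B.card = n - 2 - N.card := by rw [hB, card_sdiff_of_subset hNsub, hVp]
  have hNle : N.card ≤ n - 2 := hVp ▸ card_le_card hNsub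
  set m := B.card with hm
  have hNc : N.card = n - 2 - m := by omega
  rw [← hBc] at hpq
  have hBV : B ⊆ V := sdiff_subset.trans sdiff_subset
  -- edges meeting p
  have h1 : ∀ E ∈ F, (∃ x ∈ p, x ∈ E) → p ⊆ E := by
    intro E hE ⟨x, hxp, hxE⟩
    by_contra hne
    obtain ⟨E', hE', hpE', hd⟩ := hpK E (by rw [(hF E hE).2]; omega)
    apply hP
    apply hasLPath_two hE hE'
    obtain ⟨y, hyp, hyE⟩ := not_subset.1 hne
    have : E ∩ E' = {x} := by
      ext z
      simp only [mem_inter, mem_singleton]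
      constructor
      · rintro ⟨hz, hz'⟩
        have hzp : z ∈ p := hd (mem_inter.2 ⟨hz', hz⟩)
        by_contra hzx
        have : ({x, y, z} : Finset α) ⊆ p := by
          intro w hw; simp at hw; rcases hw with rfl | rfl | rfl <;> assumption
        have h3 := card_le_card this
        rw [card_eq_three.2 ⟨x, y, z, by rintro rfl; exact hyE hxE, Ne.symm hzx, by rintro rfl; exact hyE hz, rfl⟩] at h3
        omega
      · rintro rfl; exact ⟨hxE, hpE' hxp⟩
    rw [this]; simp
  have h2 : ∀ E ∈ F, ¬ p ⊆ E → E ⊆ B := by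
    intro E hE hpE x hx
    have hxp : ∀ y ∈ p, y ∉ E := fun y hy hyE => hpE (h1 E hE ⟨y, hy, hyE⟩)
    rw [hB, mem_sdiff, mem_sdiff]
    refine ⟨⟨(hF E hE).1 hx, fun h => hxp x h hx⟩, fun hxN => ?_⟩
    simp only [hN, NTwo, mem_filter] at hxN
    obtain ⟨E', hE', hpE', hd⟩ := hxN.2.2 E (by rw [(hF E hE).2]; omega)
    apply hP
    apply hasLPath_two hE hE'
    have : E ∩ E' = {x} := by
      ext z
      simp only [mem_inter, mem_singleton]
      constructor
      · rintro ⟨hz, hz'⟩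
        have := hd (mem_inter.2 ⟨hz', hz⟩)
        rcases mem_insert.1 this with h | h
        · exact h
        · exact absurd hz (hxp z h)
      · rintro rfl; exact ⟨hx, hpE' (mem_insert_self _ _)⟩
    rw [this]; simp
  have hX : (F.filter (fun E => ¬ p ⊆ E)).card ≤ C2 * m ^ (r + 2) := by
    refine hC2 α B _ ?_ (fun h => hP (h.mono (filter_subset _ _)))
    intro E hE
    rw [mem_filter] at hE
    exact ⟨h2 E hE.1 hE.2, (hF E hE.1).2⟩
  have hY : (F.filter (fun E => p ⊆ E)).card ≤ (n - 2 - m).choose (r+2) + m * (s * n ^ r) := by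
    have hsub : F.filter (fun E => p ⊆ E) ⊆
        (N.powersetCard (r+2)).image (fun S => p ∪ S) ∪
          B.biUnion (fun z => F.filter (insert z p ⊆ ·)) := by
      intro E hE
      rw [mem_filter] at hE
      by_cases h : ∃ z ∈ B, z ∈ E
      · obtain ⟨z, hz, hzE⟩ := h
        apply mem_union_right
        exact mem_biUnion.2 ⟨z, hz, mem_filter.2 ⟨hE.1, insert_subset hzE hE.2⟩⟩
      · push Not at h
        apply mem_union_left
        refine mem_image.2 ⟨E \ p, mem_powersetCard.2 ⟨?_, ?_⟩, union_sdiff_of_subset hE.2⟩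
        · intro x hx
          rw [mem_sdiff] at hx
          by_contra hxN
          exact h x (mem_sdiff.2 ⟨mem_sdiff.2 ⟨(hF E hE.1).1 hx.1, hx.2⟩, hxN⟩) hx.1
        · rw [card_sdiff_of_subset hE.2, (hF E hE.1).2, hp2]; omega
    refine (card_le_card hsub).trans ((card_union_le _ _).trans (Nat.add_le_add ?_ ?_))
    · refine card_image_le.trans ?_
      rw [card_powersetCard, hNc]
    · refine card_biUnion_le.trans ((sum_le_card_nsmul _ _ (s * n ^ r) ?_).trans (by simp [hm]))
      intro z hz
      rw [hB, mem_sdiff, mem_sdiff] at hz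
      have hnk : ¬ Ker F s (insert z p) := fun h => hz.2 (by
        simp only [hN, NTwo, mem_filter]; exact ⟨hz.1.1, hz.1.2, h⟩)
      have := nonker_deg hF hnk
      rw [card_insert_of_notMem hz.1.2, hp2] at this
      exact this
  have hsplit := card_filter_add_card_filter_not (s := F) (fun E => p ⊆ E)
  have hXq : q * (C2 * m ^ (r+2)) ≤ (s + C2) * m * n ^ (r+1) := by
    have hmn : m ≤ n := card_le_card hBV
    calc q * (C2 * m ^ (r+2)) = C2 * m * ((q * m) * m ^ r) := by ring
      _ ≤ (s + C2) * m * (n * n ^ r) := by gcongr; omega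
      _ = _ := by ring
  have hfin := hcl n (by omega) 2 le_rfl m _ hpq hXq
  have e1 : m * (s * n ^ r) ≤ (s + C2) * m * n ^ r := by
    calc m * (s * n ^ r) = s * m * n ^ r := by ring
      _ ≤ _ := by gcongr; omega
  have e2 : (n - 2).choose (r + 4 - 2) = (n-2).choose (r+2) := rfl
  omega


open Classical in
theorem graph_deg {α : Type} (R : α → α → Prop) (hsym : ∀ x y, R x y → R y x)
    (hirr : ∀ x, ¬ R x x) (d : ℕ) (N : ℕ) : ∀ (V : Finset α), V.card = N →
    (∀ U ⊆ V, U.Nonempty → ∃ x ∈ U, (U.filter (R x)).card < d) →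
    ∑ v ∈ V, (V.filter (R v)).card ≤ 2 * d * V.card := by
  induction N with
  | zero =>
    intro V hV _
    rw [card_eq_zero] at hV; subst hV; simp
  | succ N ih =>
    intro V hV h
    obtain ⟨x, hx, hxd⟩ := h V (Subset.refl _) (card_pos.1 (by omega))
    have hc : (V.erase x).card = N := by rw [card_erase_of_mem hx]; omega
    have h' := ih (V.erase x) hc (fun U hU => h U (hU.trans (erase_subset _ _)))
    rw [← add_sum_erase _ _ hx]
    have e : ∀ v ∈ V.erase x, (V.filter (R v)).card =
        ((V.erase x).filter (R v)).card + if R x v then 1 else 0 := by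
      intro v hv
      rw [filter_erase]
      by_cases hxv : R x v
      · have : x ∈ V.filter (R v) := mem_filter.2 ⟨hx, hsym _ _ hxv⟩
        rw [card_erase_of_mem this, if_pos hxv]
        have := card_pos.2 ⟨x, this⟩
        omega
      · have : x ∉ V.filter (R v) := fun h => hxv (hsym _ _ (mem_filter.1 h).2)
        rw [erase_eq_of_notMem this, if_neg hxv]; rfl
    rw [sum_congr rfl e, sum_add_distrib]
    have e2 : ∑ v ∈ V.erase x, (if R x v then 1 else 0) ≤ (V.filter (R x)).card := by
      rw [← card_filter]
      exact card_le_card (filter_subset_filter _ (erase_subset _ _))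
    rw [hc] at h'
    rw [hV]
    have : 2 * d * (N+1) = 2 * d * N + 2 * d := by ring
    omega

open Classical in
theorem graph_long {α : Type} (R : α → α → Prop) (hirr : ∀ x, ¬ R x x)
    (d : ℕ) (U : Finset α) (hU : U.Nonempty) (h : ∀ x ∈ U, d ≤ (U.filter (R x)).card) :
    ∀ j, j < d → ∃ u : ℕ → α, (∀ i ≤ j, u i ∈ U) ∧
      (∀ i i', i ≤ j → i' ≤ j → u i = u i' → i = i') ∧ ∀ i < j, R (u i) (u (i+1)) := by
  intro j
  induction j with
  | zero =>
    intro _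
    obtain ⟨x, hx⟩ := hU
    exact ⟨fun _ => x, fun _ _ => hx, by omega, by omega⟩
  | succ j ih =>
    intro hj
    obtain ⟨u, h1, h2, h3⟩ := ih (by omega)
    have : ((range (j+1)).image u).card < (U.filter (R (u j))).card :=
      lt_of_lt_of_le (lt_of_le_of_lt card_image_le (by rw [card_range]; exact hj)) (h _ (h1 j le_rfl))
    obtain ⟨y, hy, hyn⟩ := exists_mem_notMem_of_card_lt_card this
    rw [mem_filter] at hy
    have hne : ∀ i ≤ j, u i ≠ y := by
      intro i hi he
      exact hyn (mem_image.2 ⟨i, mem_range.2 (by omega), he⟩)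
    refine ⟨fun i => if i ≤ j then u i else y, ?_, ?_, ?_⟩
    · intro i hi
      dsimp; split_ifs with hij
      · exact h1 i hij
      · exact hy.1
    · intro i i' hi hi' he
      dsimp at he
      split_ifs at he with a b b
      · exact h2 _ _ a b he
      · exact absurd he (hne _ a)
      · exact absurd he.symm (hne _ b)
      · omega
    · intro i hi
      dsimp
      rw [if_pos (by omega : i ≤ j)]
      split_ifs with a
      · exact h3 i (by omega)
      · have : i = j := by omega
        subst this; exact hy.2

open Classical in
noncomputable def NOne {α : Type} [DecidableEq α] (V : Finset α) (F : Finset (Finset α)) (s : ℕ)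
    (v : α) : Finset α := V.filter (fun x => x ≠ v ∧ Ker F s {v, x})

theorem NOne_sum {α : Type} [DecidableEq α] {V : Finset α} {F : Finset (Finset α)} {k s l : ℕ}
    (hF : ∀ E ∈ F, E.card = k) (hP : ¬ HasLPath F (l+1)) (hs : (l + 2) * k + l + 2 ≤ s) :
    ∑ v ∈ V, (NOne V F s v).card ≤ 2 * (l + 2) * V.card := by
  classical
  have hsym : ∀ x y, (y ≠ x ∧ Ker F s {x, y}) → (x ≠ y ∧ Ker F s {y, x}) := by
    intro x y ⟨h1, h2⟩
    exact ⟨h1.symm, by rwa [pair_comm]⟩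
  have := graph_deg (fun x y => y ≠ x ∧ Ker F s {x, y}) hsym (fun x h => h.1 rfl) (l+2) V.card V rfl ?_
  · refine le_trans (le_of_eq ?_) this
    apply sum_congr rfl
    intro v _
    unfold NOne
    congr!
  · intro U hU hne
    by_contra hcon
    push Not at hcon
    obtain ⟨u, h1, h2, h3⟩ := graph_long (fun x y => y ≠ x ∧ Ker F s {x, y}) (fun x h => h.1 rfl) (l+2) U hne
      (fun x hx => by convert hcon x hx) (l+1) (by omega)
    exact hP (graph_path hF u h2 (fun i hi => (h3 i (by omega)).2) hs)


theorem common_nbr {α : Type} [DecidableEq α] {F : Finset (Finset α)} {k s t : ℕ}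
    (hF : ∀ E ∈ F, E.card = k) (hs : (2 * t + 3) * k + 2 * t + 3 ≤ s) {T M : Finset α}
    (hT : T.card = t + 1) (hM : t + 2 ≤ M.card)
    (h : ∀ x ∈ M, ∀ v ∈ T, x ≠ v ∧ Ker F s {v, x}) : HasLPath F (2 * t + 2) := by
  have hTe : ∃ f : ℕ → α, (∀ i < t + 1, f i ∈ T) ∧ ∀ i j, i < t + 1 → j < t + 1 → f i = f j → i = j := by
    refine ⟨fun i => if hi : i < T.card then T.equivFin.symm ⟨i, hi⟩ else (T.equivFin.symm ⟨0, by omega⟩), ?_, ?_⟩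
    · intro i hi; simp [hT, hi]
    · intro i j hi hj; simp [hT, hi, hj, Subtype.ext_iff.symm]
  have hMe : ∃ f : ℕ → α, (∀ i < t + 2, f i ∈ M) ∧ ∀ i j, i < t + 2 → j < t + 2 → f i = f j → i = j := by
    refine ⟨fun i => if hi : i < M.card then M.equivFin.symm ⟨i, hi⟩ else (M.equivFin.symm ⟨0, by omega⟩), ?_, ?_⟩
    · intro i hi; simp [lt_of_lt_of_le hi hM]
    · intro i j hi hj; simp [lt_of_lt_of_le hi hM, lt_of_lt_of_le hj hM, Subtype.ext_iff.symm]
  obtain ⟨f, hf, hfi⟩ := hTe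
  obtain ⟨g, hg, hgi⟩ := hMe
  refine graph_path (l := 2 * t + 1) (s := s) hF (fun i => if i % 2 = 0 then g (i/2) else f (i/2)) ?_ ?_ (by nlinarith)
  · intro i j hi hj he
    split_ifs at he with a b b
    · have := hgi _ _ (by omega) (by omega) he
      omega
    · exact absurd he (h _ (hg _ (by omega)) _ (hf _ (by omega))).1
    · exact absurd he.symm (h _ (hg _ (by omega)) _ (hf _ (by omega))).1
    · have := hfi _ _ (by omega) (by omega) he
      omega
  · intro i hi
    by_cases a : i % 2 = 0
    · rw [if_pos a, if_neg (by omega), pair_comm]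
      exact (h _ (hg _ (by omega)) _ (hf _ (by omega))).2
    · rw [if_neg a, if_pos (by omega)]
      exact (h _ (hg _ (by omega)) _ (hf _ (by omega))).2

theorem sum_S {α : Type} [DecidableEq α] {V S : Finset α} {F : Finset (Finset α)} {k s t : ℕ}
    (hF : ∀ E ∈ F, E.card = k) (hs : (2 * t + 3) * k + 2 * t + 3 ≤ s)
    (hP : ¬ HasLPath F (2 * t + 2)) :
    ∑ v ∈ S, (NOne V F s v).card ≤ t * V.card + S.card * (2 ^ S.card * (t + 1)) := by
  classical
  have e1 : ∑ v ∈ S, (NOne V F s v).card = ∑ x ∈ V, (S.filter (fun v => x ∈ NOne V F s v)).card := by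
    have : ∀ v ∈ S, (NOne V F s v).card = ∑ x ∈ V, if x ∈ NOne V F s v then 1 else 0 := by
      intro v _
      rw [← card_filter]
      congr 1
      ext x
      simp only [mem_filter, NOne]
      tauto
    rw [sum_congr rfl this, sum_comm]
    simp only [card_filter]
  rw [e1]
  set Bad := V.filter (fun x => t + 1 ≤ (S.filter (fun v => x ∈ NOne V F s v)).card) with hBad
  have e2 : Bad.card ≤ 2 ^ S.card * (t + 1) := by
    have hsub : Bad ⊆ (S.powersetCard (t+1)).biUnion
        (fun T => V.filter (fun x => ∀ v ∈ T, x ∈ NOne V F s v)) := by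
      intro x hx
      rw [hBad, mem_filter] at hx
      obtain ⟨T, hT, hTc⟩ := exists_subset_card_eq hx.2
      refine mem_biUnion.2 ⟨T, mem_powersetCard.2 ⟨hT.trans (filter_subset _ _), hTc⟩, ?_⟩
      exact mem_filter.2 ⟨hx.1, fun v hv => (mem_filter.1 (hT hv)).2⟩
    refine (card_le_card hsub).trans (card_biUnion_le.trans ((sum_le_card_nsmul _ _ (t+1) ?_).trans ?_))
    · intro T hT
      by_contra hcon
      push Not at hcon
      refine hP (common_nbr hF hs (mem_powersetCard.1 hT).2 hcon ?_)
      intro x hx v hv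
      have := (mem_filter.1 hx).2 v hv
      simp only [NOne, mem_filter] at this
      exact this.2
    · rw [smul_eq_mul]
      apply Nat.mul_le_mul_right
      rw [← card_powerset]
      apply card_le_card
      intro T hT
      exact mem_powerset.2 (mem_powersetCard.1 hT).1
  calc ∑ x ∈ V, (S.filter (fun v => x ∈ NOne V F s v)).card
      ≤ ∑ x ∈ V, (t + if x ∈ Bad then S.card else 0) := by
        apply sum_le_sum
        intro x hx
        by_cases hb : x ∈ Bad
        · rw [if_pos hb]
          exact (card_filter_le _ _).trans (by omega)
        · rw [if_neg hb]
          rw [hBad, mem_filter] at hb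
          push Not at hb
          have := hb hx
          omega
    _ = t * V.card + S.card * Bad.card := by
        rw [sum_add_distrib, ← sum_filter]
        have : V.filter (fun x => x ∈ Bad) = Bad := by
          ext x; simp only [mem_filter, hBad]; tauto
        rw [this]; simp [mul_comm]
    _ ≤ _ := by gcongr

theorem stab_arith {q t n Y A C2 c : ℕ} {R C : ℕ} (ht : 1 ≤ t)
    (f1 : 2 * (q+1) * A ≤ 2 * (q+1) * (R * (C * Y)) + 2 * (q * Y * (t * n + C2)) + n * Y)
    (f2 : t * (n * Y) ≤ A + t * (c * Y)) :
    n * Y ≤ (2 * (q+1) * R * C + 2 * (q+1) * C2 + 2 * (q+1) * t * c) * Y := by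
  have f4 := Nat.mul_le_mul_left (2 * (q+1)) f2
  have f5 : n * Y ≤ t * (n * Y) := Nat.le_mul_of_pos_left _ (by omega)
  linarith [Nat.zero_le (C2 * Y)]

theorem stab_one (k s q t : ℕ) (hk : 4 ≤ k) (ht : 1 ≤ t) (hs : (2 * t + 3) * k + 2 * t + 3 ≤ s)
    (hq : 2 ≤ q) :
    ∃ n0 : ℕ, ∀ (α : Type) [Fintype α] [DecidableEq α] (V : Finset α) (F : Finset (Finset α)),
    (∀ E ∈ F, E ⊆ V ∧ E.card = k) → ¬ HasLPath F (2 * t + 2) → n0 ≤ V.card →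
    t * (V.card - t).choose (k - 1) ≤ F.card →
    ∃ v ∈ V, q * (V.card - 1 - (NOne V F s v).card) ≤ V.card := by
  classical
  obtain ⟨C, hC⟩ := good_one k (2 * t + 1) s hk (by nlinarith) (by nlinarith)
  obtain ⟨r, rfl⟩ : ∃ r, k = r + 3 := ⟨k - 3, by omega⟩
  set R := (r+2).factorial with hR
  set C1 := 2 * (2 * t + 3) with hC1
  set e := 2 * q * C1 with he
  set K := e * C1 with hK
  set C2 := K * (2 ^ K * (t + 1)) with hC2
  set D := 2 * q * R * C + 2 * q * C2 + 2 * q * t * ((r+2) * (r+2+t)) with hD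
  refine ⟨D + 2 , ?_⟩
  intro α _ _ V F hF hP hn hFc
  by_contra hcon
  push Not at hcon
  set n := V.card with hnd
  set N : α → Finset α := NOne V F s with hN
  have hB0 := hC α V F hF hP
  have e0 : r + 3 - 2 = r + 1 := rfl
  rw [e0] at hB0
  have hB : (F.filter (fun E => ¬ GoodOne F s E)).card ≤ C * n ^ (r+1) := by convert hB0
  have hsum : ∑ v ∈ V, (N v).card ≤ C1 * n := by
    have := NOne_sum (V := V) (s := s) (k := r+3) (l := 2 * t + 1) (fun E hE => (hF E hE).2) hP (by nlinarith)
    exact this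
  have hNn : ∀ v, (N v).card ≤ n := fun v => card_le_card (filter_subset _ _)
  set S := V.filter (fun v => n ≤ e * (N v).card) with hS
  have hScard : S.card ≤ K := by
    have : S.card * n ≤ K * n := by
      calc S.card * n = ∑ v ∈ S, n := by simp
        _ ≤ ∑ v ∈ S, e * (N v).card := sum_le_sum (fun v hv => (mem_filter.1 hv).2)
        _ ≤ ∑ v ∈ V, e * (N v).card := sum_le_sum_of_subset (filter_subset _ _)
        _ = e * ∑ v ∈ V, (N v).card := (mul_sum _ _ _).symm
        _ ≤ e * (C1 * n) := by gcongr
        _ = _ := by rw [hK]; ring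
    exact Nat.le_of_mul_le_mul_right this (by omega)
  have hSsum : ∑ v ∈ S, (N v).card ≤ t * n + C2 := by
    refine (sum_S (fun E hE => (hF E hE).2) hs hP).trans ?_
    rw [hC2]
    gcongr
    omega
  -- covering
  have hcov : F.card ≤ C * n ^ (r+1) + ∑ v ∈ V, ((N v).card).choose (r+2) := by
    rw [← card_filter_add_card_filter_not (s := F) (fun E => ¬ GoodOne F s E)]
    refine Nat.add_le_add hB ?_
    have hsub : F.filter (fun E => ¬ ¬ GoodOne F s E) ⊆
        V.biUnion (fun v => ((N v).powersetCard (r+2)).image (fun T => insert v T)) := by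
      intro E hE
      rw [mem_filter, not_not] at hE
      obtain ⟨hEF, v, hv, hx⟩ := hE
      refine mem_biUnion.2 ⟨v, (hF E hEF).1 hv, mem_image.2 ⟨E.erase v, mem_powersetCard.2 ⟨?_, ?_⟩, insert_erase hv⟩⟩
      · intro x hxE
        rw [mem_erase] at hxE
        simp only [hN, NOne, mem_filter]
        exact ⟨(hF E hEF).1 hxE.2, hxE.1, hx x hxE.2 hxE.1⟩
      · rw [card_erase_of_mem hv, (hF E hEF).2]; rfl
    refine (card_le_card hsub).trans (card_biUnion_le.trans (sum_le_sum fun v _ => card_image_le.trans ?_))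
    rw [card_powersetCard]
  have hRs : R * ∑ v ∈ V, ((N v).card).choose (r+2) ≤ ∑ v ∈ V, (N v).card ^ (r+2) := by
    rw [mul_sum]
    exact sum_le_sum fun v _ => choose_up _ _
  have hsp := sum_filter_add_sum_filter_not V (fun v => n ≤ e * (N v).card) (fun v => (N v).card ^ (r+2))
  rw [← hS] at hsp
  have hA1 : q * ∑ v ∈ S, (N v).card ^ (r+2) ≤ (q - 1) * n ^ (r+1) * (t * n + C2) := by
    calc q * ∑ v ∈ S, (N v).card ^ (r+2) ≤ (q - 1) * n ^ (r+1) * ∑ v ∈ S, (N v).card := by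
          rw [mul_sum, mul_sum]
          apply sum_le_sum
          intro v hv
          have h1 := hcon v (mem_filter.1 hv).1
          have h2 : q * (N v).card ≤ (q - 1) * n := by
            rw [Nat.mul_sub, Nat.mul_sub] at h1
            rw [Nat.sub_mul, one_mul]; omega
          calc q * (N v).card ^ (r+2) = (q * (N v).card) * (N v).card ^ r * (N v).card := by ring
            _ ≤ ((q-1) * n) * n ^ r * (N v).card := by
              gcongr; exact hNn v
            _ = _ := by ring
      _ ≤ _ := by gcongr
  have hA2 : e * ∑ v ∈ V with ¬ n ≤ e * (N v).card, (N v).card ^ (r+2) ≤ C1 * n ^ (r+2) := by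
    calc e * ∑ v ∈ V with ¬ n ≤ e * (N v).card, (N v).card ^ (r+2)
        ≤ n ^ (r+1) * ∑ v ∈ V with ¬ n ≤ e * (N v).card, (N v).card := by
          rw [mul_sum, mul_sum]
          apply sum_le_sum
          intro v hv
          have h2 : e * (N v).card ≤ n := by
            have := (mem_filter.1 hv).2; omega
          calc e * (N v).card ^ (r+2) = (e * (N v).card) * (N v).card ^ r * (N v).card := by ring
            _ ≤ n * n ^ r * (N v).card := by
              gcongr; exact hNn v
            _ = _ := by ring
      _ ≤ n ^ (r+1) * ∑ v ∈ V, (N v).card := by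
          gcongr
          exact filter_subset _ _
      _ ≤ n ^ (r+1) * (C1 * n) := by gcongr
      _ = _ := by ring
  have hA2' : 2 * q * ∑ v ∈ V with ¬ n ≤ e * (N v).card, (N v).card ^ (r+2) ≤ n ^ (r+2) := by
    have hc1 : 0 < C1 := by omega
    apply Nat.le_of_mul_le_mul_left _ hc1
    refine le_trans (le_of_eq ?_) hA2
    rw [he]; ring
  have hlow := pow_low t n (r+1)
  have hFc' : t * (n - t).choose (r + 1 + 1) ≤ F.card := hFc
  obtain ⟨q', rfl⟩ : ∃ q', q = q' + 1 := ⟨q - 1, by omega⟩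
  rw [Nat.add_sub_cancel] at hA1
  have f1 : 2 * (q'+1) * (R * F.card) ≤ 2 * (q'+1) * (R * (C * n ^ (r+1))) +
      2 * (q' * n ^ (r+1) * (t * n + C2)) + n ^ (r+2) := by
    have g1 : R * F.card ≤ R * (C * n ^ (r+1)) + ∑ v ∈ V, (N v).card ^ (r+2) := by
      refine (Nat.mul_le_mul_left R hcov).trans ?_
      rw [mul_add]; omega
    rw [← hsp] at g1
    have g2 := Nat.mul_le_mul_left (2 * (q'+1)) g1
    rw [Nat.mul_add _ (R * (C * n ^ (r+1))), Nat.mul_add _ (∑ v ∈ S, (N v).card ^ (r+2))] at g2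
    have g3 : 2 * (q'+1) * ∑ v ∈ S, (N v).card ^ (r+2) ≤ 2 * (q' * n ^ (r+1) * (t * n + C2)) := by
      rw [mul_assoc]; exact Nat.mul_le_mul_left _ hA1
    omega
  have f2 : t * n ^ (r+2) ≤ R * F.card + t * ((r+2) * (r+2+t) * n ^ (r+1)) := by
    have g1 := Nat.mul_le_mul_left t hlow
    have g2 := Nat.mul_le_mul_left R hFc'
    refine g1.trans ?_
    rw [mul_add]
    refine Nat.add_le_add (le_trans (le_of_eq ?_) g2) le_rfl
    rw [hR]; ring
  have f3 : n * n ^ (r+1) ≤ D * n ^ (r+1) := by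
    have e1 : n ^ (r+2) = n * n ^ (r+1) := by ring
    rw [e1] at f1 f2
    set Y := n ^ (r+1) with hY
    rw [hD]
    exact stab_arith ht f1 f2
  have hpos : 0 < n ^ (r+1) := by
    have : 0 < n := by omega
    positivity
  have := Nat.le_of_mul_le_mul_right f3 hpos
  omega


def fUp (k : ℕ) : ℕ → ℕ → ℕ
  | 0, n => (n - 2).choose (k - 2)
  | t + 1, n => (n - 1).choose (k - 1) + fUp k t (n - 1)

theorem fUp_ge (k t : ℕ) : ∀ n, t * (n - t).choose (k - 1) ≤ fUp k t n := by
  induction t with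
  | zero => intro n; simp
  | succ t ih =>
    intro n
    have h := ih (n - 1)
    have e : n - 1 - t = n - (t + 1) := by omega
    rw [e] at h
    have h2 := Nat.choose_le_choose (k-1) (show n - (t+1) ≤ n - 1 by omega)
    show _ ≤ (n - 1).choose (k - 1) + fUp k t (n - 1)
    rw [add_mul]; omega

theorem fUp_eq (k t : ℕ) : ∀ n, fUp k t n =
    (∑ i ∈ Finset.Icc 1 t, (n - i).choose (k - 1)) + (n - t - 2).choose (k - 2) := by
  induction t with
  | zero => intro n; simp [fUp]
  | succ t ih =>
    intro n
    show (n - 1).choose (k - 1) + fUp k t (n - 1) = _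
    rw [ih (n-1), ← Finset.sum_Ioc_add_eq_sum_Icc (by omega : 1 ≤ t + 1)]
    have e1 : Finset.Ioc 1 (t+1) = (Finset.Icc 1 t).image (· + 1) := by
      ext x; simp only [mem_Ioc, mem_image, mem_Icc]
      constructor
      · intro h; exact ⟨x - 1, by omega, by omega⟩
      · rintro ⟨y, h, rfl⟩; omega
    rw [e1, sum_image (fun a _ b _ h => by simpa using h)]
    have e2 : ∀ i ∈ Finset.Icc 1 t, (n - 1 - i).choose (k-1) = (n - (i+1)).choose (k-1) := by
      intro i _; congr 1; omega
    rw [sum_congr rfl e2]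
    have e3 : n - 1 - t - 2 = n - (t+1) - 2 := by omega
    rw [e3]; ring

theorem G_nopath {α : Type} [DecidableEq α] {V B : Finset α} {F : Finset (Finset α)} {k s t : ℕ} {v : α}
    (hk : 4 ≤ k) (hF : ∀ E ∈ F, E ⊆ V ∧ E.card = k) (hP : ¬ HasLPath F (2 * t + 4))
    (hs : (2 * t + 3) * k ≤ s) (hB : ∀ x ∈ V, x ∉ B → x ≠ v → x ∈ NOne V F s v)
    (hN : (2 * t + 3) * k < (NOne V F s v).card) {G : Finset (Finset α)} (hGF : G ⊆ F)
    (hG : ∀ E ∈ G, v ∉ E ∧ (E ∩ B).card ≤ k - 2) : ¬ HasLPath G (2 * t + 2) := by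
  rintro ⟨P, h1, h2, h3⟩
  have hE := h1 (2 * t + 1) (by omega)
  have hw := h2 (2 * t) (by omega)
  obtain ⟨w, hw⟩ := card_eq_one.1 hw
  have hc : 1 < (P (2*t+1) \ B).card := by
    have := card_sdiff_add_card_inter (P (2*t+1)) B
    have := (hG _ hE).2
    have := (hF _ (hGF hE)).2
    omega
  obtain ⟨x, hx, hxw⟩ := exists_mem_ne hc w
  rw [mem_sdiff] at hx
  have hxv : x ≠ v := by rintro rfl; exact (hG _ hE).1 hx.1
  have hxN := hB x ((hF _ (hGF hE)).1 hx.1) hx.2 hxv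
  set W := (range (2*t+1+1)).biUnion P with hW
  have hpt : PathTo F (2*t+1) W x := by
    refine ⟨P, ⟨fun i hi => hGF (h1 i hi), h2, h3⟩, rfl, hx.1, ?_⟩
    intro i hi hxi
    by_cases hi2 : i = 2 * t
    · subst hi2
      have : x ∈ P (2*t) ∩ P (2*t+1) := mem_inter.2 ⟨hxi, hx.1⟩
      rw [hw, mem_singleton] at this
      exact hxw this
    · have := h3 i (2*t+1) (by omega) (by omega)
      have h' : x ∈ P i ∩ P (2*t+1) := mem_inter.2 ⟨hxi, hx.1⟩
      rw [this] at h'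
      simp at h'
  have hvW : v ∉ W := by
    rw [hW, mem_biUnion]
    rintro ⟨i, hi, hvi⟩
    exact (hG _ (h1 i (mem_range.1 hi))).1 hvi
  have hFk : ∀ E ∈ F, E.card = k := fun E hE => (hF E hE).2
  have hWc := hpt.card_le hFk
  simp only [NOne, mem_filter] at hxN
  obtain ⟨E1, hE1, hs1, hd1⟩ := hxN.2.2 W (by nlinarith)
  have hp2 := hpt.extend hE1 (hs1 (by simp)) (fun z hz => by
    have := hd1 hz
    simp only [mem_insert, mem_singleton] at this ⊢
    rcases this with rfl | h
    · exact absurd (mem_inter.1 hz).2 hvW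
    · exact h) (y := v) (hs1 (by simp)) (Ne.symm hxv)
  have hWc2 := hp2.card_le hFk
  have : (W ∪ E1).card < (NOne V F s v).card := by
    refine lt_of_le_of_lt (hWc2.trans ?_) hN
    exact le_of_eq (by ring)
  obtain ⟨y, hy, hyn⟩ := exists_mem_notMem_of_card_lt_card this
  simp only [NOne, mem_filter] at hy
  obtain ⟨E2, hE2, hs2, hd2⟩ := hy.2.2 (W ∪ E1) (hWc2.trans (by nlinarith))
  have hp3 := hp2.extend hE2 (hs2 (by simp)) (fun z hz => by
    have := hd2 hz
    simp only [mem_insert, mem_singleton] at this ⊢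
    rcases this with h | rfl
    · exact h
    · exact absurd (mem_inter.1 hz).2 hyn) (y := y) (hs2 (by simp)) hy.2.1
  exact hP hp3.hasLPath

theorem step_upper (k t : ℕ) (hk : 4 ≤ k)
    (ih : ∃ n0 : ℕ, ∀ (α : Type) [Fintype α] [DecidableEq α] (V : Finset α) (F : Finset (Finset α)),
      (∀ E ∈ F, E ⊆ V ∧ E.card = k) → ¬ HasLPath F (2 * t + 2) → n0 ≤ V.card →
      F.card ≤ fUp k t V.card) :
    ∃ n0 : ℕ, ∀ (α : Type) [Fintype α] [DecidableEq α] (V : Finset α) (F : Finset (Finset α)),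
      (∀ E ∈ F, E ⊆ V ∧ E.card = k) → ¬ HasLPath F (2 * (t + 1) + 2) → n0 ≤ V.card →
      F.card ≤ fUp k (t + 1) V.card := by
  classical
  obtain ⟨n1, hih⟩ := ih
  obtain ⟨C3, hC3⟩ := crude k (2 * t + 3) hk
  obtain ⟨r, rfl⟩ : ∃ r, k = r + 4 := ⟨k - 4, by omega⟩
  set s := (2 * (t+1) + 3) * (r + 4) + 2 * (t+1) + 3 with hs
  obtain ⟨q, n2, hq, hcl⟩ := clean_ineq (r+1) (s + C3)
  obtain ⟨n3, hst⟩ := stab_one (r+4) s q (t+1) hk (by omega) (by omega) hq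
  refine ⟨n1 + 1 + n2 + n3 + 2 * ((2 * t + 3) * (r + 4)) + 4, ?_⟩
  intro α _ _ V F hF hP hn
  by_contra hcon
  push Not at hcon
  obtain ⟨v, hvV, hvq⟩ := hst α V F hF hP (by omega) ((fUp_ge _ _ _).trans hcon.le)
  set n := V.card with hnd
  set N := NOne V F s v with hN
  set B := (V.erase v) \ N with hB
  have hNsub : N ⊆ V.erase v := by
    intro x hx
    simp only [hN, NOne, mem_filter] at hx
    exact mem_erase.2 ⟨hx.2.1, hx.1⟩
  have hVv : (V.erase v).card = n - 1 := by rw [card_erase_of_mem hvV]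
  have hBc : B.card = n - 1 - N.card := by rw [hB, card_sdiff_of_subset hNsub, hVv]
  have hNle : N.card ≤ n - 1 := hVv ▸ card_le_card hNsub
  set m := B.card with hm
  have hNc : N.card = n - 1 - m := by omega
  rw [← hBc] at hvq
  have hBV : B ⊆ V := sdiff_subset.trans (erase_subset _ _)
  have hmn : m ≤ n := card_le_card hBV
  have h2m : 2 * m ≤ n := le_trans (Nat.mul_le_mul_right _ hq) hvq
  set Fv := F.filter (fun E => v ∈ E) with hFv
  set H := F.filter (fun E => v ∉ E ∧ r + 3 ≤ (E ∩ B).card) with hH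
  set G := F.filter (fun E => v ∉ E ∧ (E ∩ B).card ≤ r + 2) with hG
  have hsplit : F.card ≤ Fv.card + H.card + G.card := by
    have : F ⊆ (Fv ∪ H) ∪ G := by
      intro E hE
      simp only [mem_union, hFv, hH, hG, mem_filter, hE, true_and]
      by_cases hv : v ∈ E
      · simp [hv]
      · simp only [hv, not_false_eq_true, true_and, false_or]; omega
    refine (card_le_card this).trans ((card_union_le _ _).trans ?_)
    have := card_union_le Fv H
    omega
  have hGc : G.card ≤ fUp (r+4) t (n-1) := by
    have := hih α (V.erase v) G ?_ ?_ (by rw [hVv]; omega)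
    · rwa [hVv] at this
    · intro E hE
      rw [hG, mem_filter] at hE
      exact ⟨fun x hx => mem_erase.2 ⟨by rintro rfl; exact hE.2.1 hx, (hF E hE.1).1 hx⟩, (hF E hE.1).2⟩
    · refine G_nopath (V := V) (B := B) (F := F) (s := s) (v := v) hk hF hP ?_ ?_ ?_ (filter_subset _ _) ?_
      · rw [hs]; nlinarith
      · intro x hx hxB hxv
        by_contra hxN
        exact hxB (mem_sdiff.2 ⟨mem_erase.2 ⟨hxv, hx⟩, hxN⟩)
      · show _ < N.card
        omega
      · intro E hE
        exact (mem_filter.1 hE).2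
  have hHc : H.card ≤ C3 * (m ^ (r+2) * n) := by
    set X := ((B.powersetCard (r+2)) ×ˢ V).image (fun z => insert z.2 z.1) with hX
    have hXc : X.card ≤ m ^ (r+2) * n := by
      refine card_image_le.trans ?_
      rw [card_product, card_powersetCard]
      exact Nat.mul_le_mul_right _ (Nat.choose_le_pow _ _)
    refine le_trans (hC3 α H (fun E hE => (hF E (mem_filter.1 hE).1).2)
      (fun h => hP (h.mono (filter_subset _ _))) X ?_) (Nat.mul_le_mul_left _ hXc)
    intro E hE x hx
    rw [hH, mem_filter] at hE
    have hc1 : (E.erase x).card = r + 3 := by rw [card_erase_of_mem hx, (hF E hE.1).2]; rfl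
    have hc2 : r + 2 ≤ (E.erase x ∩ B).card := by
      rw [erase_inter]
      have := pred_card_le_card_erase (s := E ∩ B) (a := x)
      omega
    obtain ⟨T, hT, hTc⟩ := exists_subset_card_eq hc2
    have hTE : T ⊆ E.erase x := hT.trans inter_subset_left
    have hd : ((E.erase x) \ T).card = 1 := by rw [card_sdiff_of_subset hTE]; omega
    obtain ⟨y, hy⟩ := card_eq_one.1 hd
    have hyE : y ∈ E.erase x \ T := by rw [hy]; simp
    refine mem_image.2 ⟨(T, y), mem_product.2 ⟨mem_powersetCard.2 ⟨hT.trans inter_subset_right, hTc⟩, ?_⟩, ?_⟩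
    · exact (hF E hE.1).1 (mem_of_mem_erase (mem_sdiff.1 hyE).1)
    · show insert y T = E.erase x
      rw [← union_sdiff_of_subset hTE, hy, union_comm]; rfl
  have hFvc : Fv.card ≤ (n - 1 - m).choose (r+3) + m * (s * n ^ (r+1)) := by
    have hsub : Fv ⊆ (N.powersetCard (r+3)).image (fun S => insert v S) ∪
          B.biUnion (fun z => F.filter ({v, z} ⊆ ·)) := by
      intro E hE
      rw [hFv, mem_filter] at hE
      by_cases h : ∃ z ∈ B, z ∈ E
      · obtain ⟨z, hz, hzE⟩ := h
        apply mem_union_right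
        refine mem_biUnion.2 ⟨z, hz, mem_filter.2 ⟨hE.1, ?_⟩⟩
        exact insert_subset hE.2 (singleton_subset_iff.2 hzE)
      · push Not at h
        apply mem_union_left
        refine mem_image.2 ⟨E.erase v, mem_powersetCard.2 ⟨?_, ?_⟩, insert_erase hE.2⟩
        · intro x hx
          rw [mem_erase] at hx
          by_contra hxN
          exact h x (mem_sdiff.2 ⟨mem_erase.2 ⟨hx.1, (hF E hE.1).1 hx.2⟩, hxN⟩) hx.2
        · rw [card_erase_of_mem hE.2, (hF E hE.1).2]; rfl
    refine (card_le_card hsub).trans ((card_union_le _ _).trans (Nat.add_le_add ?_ ?_))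
    · refine card_image_le.trans ?_
      rw [card_powersetCard, hNc]
    · refine card_biUnion_le.trans ((sum_le_card_nsmul _ _ (s * n ^ (r+1)) ?_).trans (by simp [hm]))
      intro z hz
      rw [hB, mem_sdiff, mem_erase] at hz
      have hnk : ¬ Ker F s {v, z} := fun h => hz.2 (by
        simp only [hN, NOne, mem_filter]; exact ⟨hz.1.2, hz.1.1, h⟩)
      have := nonker_deg hF hnk
      rw [card_pair (Ne.symm hz.1.1)] at this
      exact this
  have hXq : q * (C3 * (m ^ (r+2) * n)) ≤ (s + C3) * m * n ^ (r+1+1) := by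
    calc q * (C3 * (m ^ (r+2) * n)) = C3 * m * ((q * m) * m ^ r * n) := by ring
      _ ≤ (s + C3) * m * (n * n ^ r * n) := by gcongr; omega
      _ = _ := by ring
  have hfin := hcl n (by omega) 1 (by omega) m _ hvq hXq
  have e1 : m * (s * n ^ (r+1)) ≤ (s + C3) * m * n ^ (r+1) := by
    calc m * (s * n ^ (r+1)) = s * m * n ^ (r+1) := by ring
      _ ≤ _ := by gcongr; omega
  have e2 : fUp (r+4) (t+1) n = (n-1).choose (r+1+2) + fUp (r+4) t (n-1) := rfl
  have e3 : (n - 1 - m).choose (r+3) = (n - 1 - m).choose (r+1+2) := rfl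
  omega

theorem main_upper (k : ℕ) (hk : 4 ≤ k) (t : ℕ) :
    ∃ n0 : ℕ, ∀ (α : Type) [Fintype α] [DecidableEq α] (V : Finset α) (F : Finset (Finset α)),
      (∀ E ∈ F, E ⊆ V ∧ E.card = k) → ¬ HasLPath F (2 * t + 2) → n0 ≤ V.card →
      F.card ≤ fUp k t V.card := by
  induction t with
  | zero => exact base_upper k hk
  | succ t ih => exact step_upper k t hk ih


theorem lower_constr {α : Type} [DecidableEq α] (k : ℕ) (hk : 4 ≤ k) (t : ℕ) : ∀ V : Finset α,
    t + 2 ≤ V.card → ∃ (F : Finset (Finset α)) (S : Finset α) (a b : α), S.card ≤ t ∧ a ≠ b ∧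
      (∀ E ∈ F, E ⊆ V ∧ E.card = k) ∧ (∀ E ∈ F, (∃ x ∈ S, x ∈ E) ∨ (a ∈ E ∧ b ∈ E)) ∧
      F.card = fUp k t V.card := by
  induction t with
  | zero =>
    intro V hV
    obtain ⟨a, ha, b, hb, hab⟩ := one_lt_card.1 (show 1 < V.card by omega)
    have hp : ({a, b} : Finset α) ⊆ V := insert_subset ha (singleton_subset_iff.2 hb)
    refine ⟨((V \ {a, b}).powersetCard (k-2)).image (fun T => T ∪ {a, b}), ∅, a, b, le_rfl, hab, ?_, ?_, ?_⟩
    · intro E hE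
      obtain ⟨T, hT, rfl⟩ := mem_image.1 hE
      rw [mem_powersetCard] at hT
      refine ⟨union_subset (hT.1.trans sdiff_subset) hp, ?_⟩
      have hd : Disjoint T {a, b} := disjoint_of_subset_left hT.1 sdiff_disjoint
      rw [card_union_of_disjoint hd, card_pair hab]; omega
    · intro E hE
      obtain ⟨T, hT, rfl⟩ := mem_image.1 hE
      right; simp
    · rw [card_image_of_injOn, card_powersetCard, card_sdiff_of_subset hp, card_pair hab]
      · rfl
      · intro T hT T' hT' h
        rw [mem_coe, mem_powersetCard] at hT hT'
        have hd : Disjoint T {a, b} := disjoint_of_subset_left hT.1 sdiff_disjoint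
        have hd' : Disjoint T' {a, b} := disjoint_of_subset_left hT'.1 sdiff_disjoint
        have h : T ∪ {a, b} = T' ∪ {a, b} := h
        rw [← union_sdiff_cancel_right hd, h, union_sdiff_cancel_right hd']
  | succ t ih =>
    intro V hV
    obtain ⟨v, hv⟩ := card_pos.1 (show 0 < V.card by omega)
    have hc : (V.erase v).card = V.card - 1 := card_erase_of_mem hv
    obtain ⟨F, S, a, b, hS, hab, h1, h2, h3⟩ := ih (V.erase v) (by omega)
    refine ⟨((V.erase v).powersetCard (k-1)).image (insert v) ∪ F, insert v S, a, b,
      (card_insert_le _ _).trans (by omega), hab, ?_, ?_, ?_⟩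
    · intro E hE
      rcases mem_union.1 hE with hE | hE
      · obtain ⟨T, hT, rfl⟩ := mem_image.1 hE
        rw [mem_powersetCard] at hT
        refine ⟨insert_subset hv (hT.1.trans (erase_subset _ _)), ?_⟩
        rw [card_insert_of_notMem (fun h => notMem_erase v V (hT.1 h))]; omega
      · exact ⟨(h1 E hE).1.trans (erase_subset _ _), (h1 E hE).2⟩
    · intro E hE
      rcases mem_union.1 hE with hE | hE
      · obtain ⟨T, hT, rfl⟩ := mem_image.1 hE
        exact Or.inl ⟨v, mem_insert_self _ _, mem_insert_self _ _⟩
      · rcases h2 E hE with ⟨x, hx, hxE⟩ | h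
        · exact Or.inl ⟨x, mem_insert_of_mem hx, hxE⟩
        · exact Or.inr h
    · have hd : Disjoint (((V.erase v).powersetCard (k-1)).image (insert v)) F := by
        rw [disjoint_left]
        intro E hE hE'
        obtain ⟨T, hT, rfl⟩ := mem_image.1 hE
        exact notMem_erase v V ((h1 _ hE').1 (mem_insert_self _ _))
      rw [card_union_of_disjoint hd, h3, card_image_of_injOn, card_powersetCard, hc]
      · rfl
      · intro T hT T' hT' h
        rw [mem_coe, mem_powersetCard] at hT hT'
        rw [← erase_insert (fun h => notMem_erase v V (hT.1 h)), h,
          erase_insert (fun h => notMem_erase v V (hT'.1 h))]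

theorem lower_nopath {α : Type} [DecidableEq α] {t : ℕ} {F : Finset (Finset α)}
    {S : Finset α} {a b : α} (hS : S.card ≤ t) (hab : a ≠ b)
    (h : ∀ E ∈ F, (∃ x ∈ S, x ∈ E) ∨ (a ∈ E ∧ b ∈ E)) : ¬ HasLPath F (2 * t + 2) := by
  rintro ⟨P, h1, h2, h3⟩
  set J := (range (2*t+2)).filter (fun i => ¬ ∃ x ∈ S, x ∈ P i) with hJ
  set I := (range (2*t+2)).filter (fun i => ∃ x ∈ S, x ∈ P i) with hI
  have hIJ : I.card + J.card = 2 * t + 2 := by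
    rw [hI, hJ, card_filter_add_card_filter_not, card_range]
  have hJc : J.card ≤ 1 := by
    have key : ∀ i ∈ J, ∀ j ∈ J, ¬ i < j := by
      intro i hi j hj hij
      rw [hJ, mem_filter, mem_range] at hi hj
      have hi' := (h _ (h1 i hi.1)).resolve_left hi.2
      have hj' := (h _ (h1 j hj.1)).resolve_left hj.2
      have hsub : ({a, b} : Finset α) ⊆ P i ∩ P j := by
        intro x hx
        simp only [mem_insert, mem_singleton] at hx
        rw [mem_inter]
        rcases hx with rfl | rfl
        · exact ⟨hi'.1, hj'.1⟩
        · exact ⟨hi'.2, hj'.2⟩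
      have hc := card_le_card hsub
      rw [card_pair hab] at hc
      by_cases e : i + 1 = j
      · subst e
        have := h2 i hj.1
        omega
      · rw [h3 i j (by omega) hj.1] at hc
        simp at hc
    rw [card_le_one]
    intro i hi j hj
    have := key i hi j hj
    have := key j hj i hi
    omega
  have hIc : I.card ≤ S.card * 2 := by
    have hsub : I ⊆ S.biUnion (fun x => (range (2*t+2)).filter (fun i => x ∈ P i)) := by
      intro i hi
      rw [hI, mem_filter] at hi
      obtain ⟨hi, x, hx, hxi⟩ := hi
      exact mem_biUnion.2 ⟨x, hx, mem_filter.2 ⟨hi, hxi⟩⟩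
    refine (card_le_card hsub).trans (card_biUnion_le_card_mul _ _ _ ?_)
    intro x _
    set Q := (range (2*t+2)).filter (fun i => x ∈ P i) with hQ
    rcases Q.eq_empty_or_nonempty with he | hne
    · rw [he]; simp
    · have hmin := Q.min'_mem hne
      set i0 := Q.min' hne with hi0
      have : Q ⊆ {i0, i0 + 1} := by
        intro j hj
        have hle : i0 ≤ j := Q.min'_le j hj
        simp only [mem_insert, mem_singleton]
        by_contra hcon
        rw [hQ, mem_filter, mem_range] at hj hmin
        have h' : x ∈ P i0 ∩ P j := mem_inter.2 ⟨hmin.2, hj.2⟩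
        rw [h3 i0 j (by omega) hj.1] at h'
        simp at h'
      exact (card_le_card this).trans card_le_two
  omega

theorem contains_iff {k l n : ℕ} (hk : 2 ≤ k) {F : Finset (Finset (Fin n))}
    (hF : ∀ A ∈ F, A.card = k) : ContainsLinearPath k l F ↔ HasLPath F l := by
  constructor
  · rintro ⟨P, -, h1, -, h2, h3⟩
    refine ⟨fun i => if h : i < l then P ⟨i, h⟩ else ∅, ?_, ?_, ?_⟩
    · intro i hi; simp only [hi, dif_pos]; exact h1 _
    · intro i hi
      simp only [hi, (by omega : i < l), dif_pos]
      exact h2 _ _ rfl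
    · intro i j hij hj
      simp only [hj, (by omega : i < l), dif_pos]
      exact h3 _ _ hij
  · rintro ⟨P, h1, h2, h3⟩
    have key : ∀ i j, i < j → j < l → P i ≠ P j := by
      intro i j hij hj he
      have hc := hF _ (h1 j hj)
      by_cases e : i + 1 = j
      · subst e
        have := h2 i hj
        rw [he, inter_self] at this
        omega
      · have := h3 i j (by omega) hj
        rw [he, inter_self] at this
        rw [this] at hc; simp at hc; omega
    refine ⟨fun i => P i, ?_, fun i => h1 _ i.2, fun i => hF _ (h1 _ i.2), ?_, fun i j hij => h3 _ _ hij j.2⟩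
    · intro i j he
      dsimp at he
      rcases lt_trichotomy (i : ℕ) j with h | h | h
      · exact absurd he (key _ _ h j.2)
      · exact Fin.ext h
      · exact absurd he.symm (key _ _ h i.2)
    · intro i j hij
      have := h2 i (by omega)
      dsimp
      rwa [hij] at this

theorem turan_linear_path_even (k t : ℕ) (hk : 4 ≤ k) (ht : 1 ≤ t) :
    ∃ n₀ : ℕ, ∀ n : ℕ, n₀ ≤ n →
      IsGreatest {m : ℕ | ∃ F : Finset (Finset (Fin n)),
          (∀ A ∈ F, A.card = k) ∧ ¬ ContainsLinearPath k (2 * t + 2) F ∧ F.card = m}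
        ((∑ i ∈ Finset.Icc 1 t, (n - i).choose (k - 1)) + (n - t - 2).choose (k - 2)) := by
  obtain ⟨n0, hn0⟩ := main_upper k hk t
  refine ⟨n0 + t + 2, ?_⟩
  intro n hn
  rw [← fUp_eq]
  have hc : (univ : Finset (Fin n)).card = n := by simp
  constructor
  · obtain ⟨F, S, a, b, hS, hab, h1, h2, h3⟩ := lower_constr k hk t (univ : Finset (Fin n)) (by omega)
    have hF : ∀ A ∈ F, A.card = k := fun E hE => (h1 E hE).2
    refine ⟨F, hF, ?_, by rw [h3, hc]⟩
    rw [contains_iff (by omega) hF]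
    exact lower_nopath hS hab h2
  · rintro m ⟨F, hF, hP, rfl⟩
    rw [contains_iff (by omega) hF] at hP
    have := hn0 (Fin n) univ F (fun E hE => ⟨subset_univ _, hF E hE⟩) hP (by omega)
    rwa [hc] at this
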